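/- Let b > 0, let q : ℝ → ℂ be continuous on [−b,b], let f solve f'' − q f = 0 on [−b,b] with f(0) = 1, f'(0) = 0, and assume f(x) ≠ 0 for all x ∈ [−b,b]. Then there exists a continuous function K on {(x,t) : |t| ≤ |x| ≤ b} such that (i) for every twice continuously differentiable u : [−b,b] → ℂ, the function (Tu)(x) = u(x) + ∫_{−x}^{x} K(x,t)u(t)dt satisfies (Tu)'' − q·(Tu) = T(u'') on [−b,b], and (ii) for every x ∈ (0,b], the series Σ_{n=0}^{∞} (β_n(x)/x) P_n(t/x) converges uniformly for t ∈ [−x,x] to K(x,t), where β_n(x) = ((2n+1)/2)·(Σ_{k=0}^{n} l_{k,n} φ_k(x)/x^k − 1). -/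

import Mathlib

open MeasureTheory Set Filter Finset Complex Topology

noncomputable section

/-- The iterated integrals X⁽ⁿ⁾: X⁽⁰⁾ ≡ 1, X⁽ⁿ⁾(x) = n ∫₀ˣ X⁽ⁿ⁻¹⁾(s) (f(s)²)^((−1)ⁿ) ds. -/
def formalX (f : ℝ → ℂ) : ℕ → ℝ → ℂ
  | 0 => fun _ => 1
  | n + 1 => fun x =>
      (n + 1 : ℂ) * ∫ s in (0:ℝ)..x, formalX f n s * ((f s) ^ 2) ^ ((-1 : ℤ) ^ (n + 1))

/-- The iterated integrals X̃⁽ⁿ⁾: X̃⁽⁰⁾ ≡ 1, X̃⁽ⁿ⁾(x) = n ∫₀ˣ X̃⁽ⁿ⁻¹⁾(s) (f(s)²)^((−1)^(n−1)) ds. -/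
def formalXt (f : ℝ → ℂ) : ℕ → ℝ → ℂ
  | 0 => fun _ => 1
  | n + 1 => fun x =>
      (n + 1 : ℂ) * ∫ s in (0:ℝ)..x, formalXt f n s * ((f s) ^ 2) ^ ((-1 : ℤ) ^ n)

/-- The formal powers φₖ: φₖ = f·X⁽ᵏ⁾ for odd k, φₖ = f·X̃⁽ᵏ⁾ for even k. -/
def formalPower (f : ℝ → ℂ) (k : ℕ) (x : ℝ) : ℂ :=
  if Odd k then f x * formalX f k x else f x * formalXt f k x

/-- The Legendre polynomial Pₙ via Rodrigues' formula. -/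
def legendreP (n : ℕ) : Polynomial ℝ :=
  ((1 : ℝ) / (2 ^ n * n.factorial)) • Polynomial.derivative^[n] ((Polynomial.X ^ 2 - 1) ^ n)

/-- βₙ(x) = ((2n+1)/2)·(Σₖ l_{k,n} φₖ(x)/xᵏ − 1), where l_{k,n} is the coefficient of xᵏ in Pₙ. -/
def betaCoef (f : ℝ → ℂ) (n : ℕ) (x : ℝ) : ℂ :=
  ((2 * n + 1 : ℂ) / 2) *
    ((∑ k ∈ Finset.range (n + 1), ((legendreP n).coeff k : ℂ) * formalPower f k x / (x : ℂ) ^ k) - 1)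

/-! In the characteristic coordinates `ξ = (x + t) / 2`, `η = (x - t) / 2` the transmutation
kernel solves a Goursat problem, and a Neumann series provides a solution of class `C¹`. The
image of `t^k` under the operator `T` satisfies `y'' - q y = k (k - 1) T[t^(k-2)]`, the equation
that reduction of order solves by the formal power `φ_k`, so `φ_k = T[t^k]`. Hence `β_n(x) / x`
is the `n`-th Fourier–Legendre coefficient of `z ↦ K x (x z)` on `[-1, 1]`. The series of a `C¹`
function `h` with `h (-1) = 0` is, up to a vanishing remainder, the integral of the
`L²`-convergent series of `h'`, so it converges uniformly. -/

section LegendrePolynomials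

open Polynomial
open scoped Nat

theorem C_mul_legendreP (n : ℕ) :
    C ((2 : ℝ) ^ n * n !) * legendreP n = derivative^[n] ((X ^ 2 - 1) ^ n) := by
  rw [legendreP, smul_eq_C_mul, ← mul_assoc, ← C_mul, mul_one_div_cancel (by positivity), C_1,
    one_mul]

theorem legendreP_zero : legendreP 0 = 1 := by
  simp only [legendreP, pow_zero, Nat.factorial_zero, Nat.cast_one, mul_one, div_one,
    Function.iterate_zero, id_eq, one_smul]

theorem derivative_legendreP_succ (n : ℕ) :
    derivative (legendreP (n + 1))
      = X * derivative (legendreP n) + ((n : ℝ[X]) + 1) * legendreP n := by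
  have base : derivative (((X : ℝ[X]) ^ 2 - 1) ^ (n + 1))
      = C (2 * ((n : ℝ) + 1)) * ((X ^ 2 - 1) ^ n * X) := by
    simp only [derivative_pow, derivative_sub, derivative_X, derivative_one, Nat.add_sub_cancel,
      map_mul, map_add, map_one, map_natCast, map_ofNat]
    push_cast
    ring
  have scale : (2 : ℝ) ^ (n + 1) * (n + 1)! = 2 * ((n : ℝ) + 1) * (2 ^ n * n !) := by
    push_cast [Nat.factorial_succ]
    ring
  have rodrigues := C_mul_legendreP n
  have hne : C ((2 : ℝ) ^ (n + 1) * (n + 1)!) ≠ 0 := C_ne_zero.2 (by positivity)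
  refine mul_left_cancel₀ hne ?_
  rw [← derivative_C_mul, C_mul_legendreP, ← Function.iterate_succ_apply' derivative,
    Function.iterate_succ_apply, base, iterate_derivative_C_mul, iterate_derivative_mul_X,
    Function.iterate_succ_apply', Nat.add_sub_cancel, ← rodrigues, derivative_C_mul, scale,
    C_mul (a := 2 * ((n : ℝ) + 1)), nsmul_eq_mul]
  push_cast
  ring

theorem derivative_legendreP_add_two (n : ℕ) :
    derivative (legendreP (n + 2))
      = (2 * (n : ℝ[X]) + 3) * legendreP (n + 1) + derivative (legendreP n) := by
  have base : derivative^[2] (((X : ℝ[X]) ^ 2 - 1) ^ (n + 2))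
      = C (2 * ((n : ℝ) + 2) * (2 * n + 3)) * (X ^ 2 - 1) ^ (n + 1)
        + C (4 * ((n : ℝ) + 2) * (n + 1)) * (X ^ 2 - 1) ^ n := by
    simp only [Function.iterate_succ_apply', Function.iterate_zero_apply, derivative_mul,
      derivative_pow, derivative_sub, derivative_X, derivative_one, derivative_zero,
      derivative_natCast, Nat.add_sub_cancel, Nat.add_succ_sub_one, map_mul, map_add, map_one,
      map_natCast, map_ofNat]
    push_cast
    ring
  have scale₂ : (2 : ℝ) ^ (n + 2) * (n + 2)!
      = 4 * ((n : ℝ) + 2) * (n + 1) * (2 ^ n * n !) := by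
    push_cast [Nat.factorial_succ]
    ring
  have scale₁ : (2 : ℝ) ^ (n + 2) * (n + 2)! = 2 * ((n : ℝ) + 2) * (2 ^ (n + 1) * (n + 1)!) := by
    push_cast [Nat.factorial_succ]
    ring
  have split : C ((2 : ℝ) ^ (n + 2) * (n + 2)!) * derivative (legendreP (n + 2))
      = C (2 * ((n : ℝ) + 2) * (2 * n + 3)) * (C ((2 : ℝ) ^ (n + 1) * (n + 1)!) * legendreP (n + 1))
        + C (4 * ((n : ℝ) + 2) * (n + 1)) * (C ((2 : ℝ) ^ n * n !) * derivative (legendreP n)) := by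
    rw [← derivative_C_mul, ← derivative_C_mul, C_mul_legendreP, C_mul_legendreP,
      C_mul_legendreP, ← Function.iterate_succ_apply' derivative,
      ← Function.iterate_succ_apply' derivative,
      ← iterate_derivative_C_mul, ← iterate_derivative_C_mul, ← iterate_map_add, ← base,
      ← Function.iterate_add_apply]
  have hne : C ((2 : ℝ) ^ (n + 2) * (n + 2)!) ≠ 0 := C_ne_zero.2 (by positivity)
  refine mul_left_cancel₀ hne ?_
  rw [split, mul_add _ ((2 * (n : ℝ[X]) + 3) * _)]
  nth_rewrite 1 [scale₁]
  rw [scale₂]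
  simp only [map_mul, map_add, map_natCast, map_ofNat]
  ring

theorem derivative_legendreP_eq_X_mul_sub (n : ℕ) :
    derivative (legendreP n)
      = X * derivative (legendreP (n + 1)) - ((n : ℝ[X]) + 1) * legendreP (n + 1) := by
  have h := derivative_legendreP_succ (n + 1)
  push_cast at h
  linear_combination h - derivative_legendreP_add_two n

theorem one_sub_X_sq_mul_derivative_legendreP_succ (n : ℕ) :
    (1 - X ^ 2) * derivative (legendreP (n + 1))
      = ((n : ℝ[X]) + 1) * (legendreP n - X * legendreP (n + 1)) := by
  linear_combination derivative_legendreP_succ n + X * derivative_legendreP_eq_X_mul_sub n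

theorem one_sub_X_sq_mul_derivative_legendreP (n : ℕ) :
    (1 - X ^ 2) * derivative (legendreP n)
      = ((n : ℝ[X]) + 1) * (X * legendreP n - legendreP (n + 1)) := by
  linear_combination X * derivative_legendreP_succ n + derivative_legendreP_eq_X_mul_sub n

theorem legendreP_differential_equation (n : ℕ) :
    derivative ((1 - X ^ 2) * derivative (legendreP n))
      = -((n : ℝ[X]) * ((n : ℝ[X]) + 1)) * legendreP n := by
  rw [one_sub_X_sq_mul_derivative_legendreP]
  simp only [derivative_mul, derivative_add, derivative_sub, derivative_natCast, derivative_one,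
    derivative_X]
  linear_combination (-(n : ℝ[X]) - 1) * derivative_legendreP_succ n

theorem eval_one_legendreP (n : ℕ) : (legendreP n).eval 1 = 1 := by
  induction n with
  | zero => rw [legendreP_zero, eval_one]
  | succ n ih =>
    have h := congrArg (eval 1) (one_sub_X_sq_mul_derivative_legendreP_succ n)
    simp only [eval_mul, eval_sub, eval_add, eval_pow, eval_X, eval_one, eval_natCast, ih] at h
    have hn : (n : ℝ) + 1 ≠ 0 := by positivity
    exact mul_left_cancel₀ hn (by linear_combination h)

theorem eval_neg_one_legendreP (n : ℕ) : (legendreP n).eval (-1) = (-1) ^ n := by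
  induction n with
  | zero => rw [legendreP_zero, eval_one, pow_zero]
  | succ n ih =>
    have h := congrArg (eval (-1)) (one_sub_X_sq_mul_derivative_legendreP_succ n)
    simp only [eval_mul, eval_sub, eval_add, eval_pow, eval_X, eval_one, eval_natCast, ih] at h
    have hn : (n : ℝ) + 1 ≠ 0 := by positivity
    exact mul_left_cancel₀ hn (by linear_combination -h)

theorem natDegree_X_sq_sub_one_pow (n : ℕ) : (((X : ℝ[X]) ^ 2 - 1) ^ n).natDegree = n + n := by
  rw [natDegree_pow, ← C_1, natDegree_X_pow_sub_C, mul_two]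

theorem degree_legendreP (n : ℕ) : (legendreP n).degree = n := by
  have monic : ((X : ℝ[X]) ^ 2 - 1) ^ n |>.Monic := (monic_X_pow_sub_C (1 : ℝ) two_ne_zero).pow n
  rw [← degree_C_mul (a := (2 : ℝ) ^ n * n !) (by positivity), C_mul_legendreP]
  refine degree_eq_of_le_of_coeff_ne_zero (natDegree_le_iff_degree_le.1 ?_) ?_
  · refine (natDegree_iterate_derivative _ n).trans ?_
    rw [natDegree_X_sq_sub_one_pow, Nat.add_sub_cancel]
  · rw [coeff_iterate_derivative, ← natDegree_X_sq_sub_one_pow, coeff_natDegree,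
      monic.leadingCoeff, natDegree_X_sq_sub_one_pow, nsmul_one, Nat.cast_ne_zero]
    exact (Nat.descFactorial_pos.2 (Nat.le_add_left n n)).ne'

theorem span_range_legendreP : Submodule.span ℝ (Set.range legendreP) = ⊤ :=
  Sequence.span ⟨legendreP, degree_legendreP⟩ fun n =>
    (leadingCoeff_ne_zero.2 (degree_ne_bot.1 (by simp [degree_legendreP]))).isUnit

/-- Sonin's function `n (n + 1) Pₙ² + (1 - X²) Pₙ'²`: it agrees with `n (n + 1) Pₙ²` at `±1` and
its derivative has the sign of `X`, so it bounds `Pₙ` on `[-1, 1]` by the values at `±1`. -/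
def legendreSonin (n : ℕ) : ℝ[X] :=
  ((n : ℝ[X]) * ((n : ℝ[X]) + 1)) * legendreP n ^ 2
    + (1 - X ^ 2) * derivative (legendreP n) ^ 2

theorem derivative_legendreSonin (n : ℕ) :
    derivative (legendreSonin n) = 2 * X * derivative (legendreP n) ^ 2 := by
  have ode := legendreP_differential_equation n
  simp only [derivative_mul, derivative_sub, derivative_one, derivative_X_sq, C_ofNat] at ode
  simp only [legendreSonin, derivative_mul, derivative_add, derivative_sub, derivative_one,
    derivative_natCast, derivative_sq, derivative_X, C_ofNat]
  linear_combination 2 * derivative (legendreP n) * ode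

theorem eval_legendreSonin (n : ℕ) (t : ℝ) :
    (legendreSonin n).eval t = n * (n + 1) * (legendreP n).eval t ^ 2
      + (1 - t ^ 2) * (derivative (legendreP n)).eval t ^ 2 := by
  simp only [legendreSonin, eval_add, eval_mul, eval_sub, eval_pow, eval_natCast, eval_one, eval_X]

theorem eval_legendreSonin_le (n : ℕ) {t : ℝ} (ht : t ∈ Set.Icc (-1 : ℝ) 1) :
    (legendreSonin n).eval t ≤ n * (n + 1) := by
  have deriv_eq (x : ℝ) : deriv (fun y => (legendreSonin n).eval y) x
      = 2 * x * (derivative (legendreP n)).eval x ^ 2 := by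
    simp only [Polynomial.deriv, derivative_legendreSonin, eval_mul, eval_pow, eval_ofNat, eval_X]
  rcases le_total 0 t with h0 | h0
  · have mono : MonotoneOn (fun x => (legendreSonin n).eval x) (Set.Icc 0 1) := by
      refine monotoneOn_of_deriv_nonneg (convex_Icc _ _) (by fun_prop) (by fun_prop) fun x hx => ?_
      rw [interior_Icc] at hx
      rw [deriv_eq]
      exact mul_nonneg (mul_nonneg zero_le_two hx.1.le) (sq_nonneg _)
    refine (mono ⟨h0, ht.2⟩ (Set.right_mem_Icc.2 zero_le_one) ht.2).trans_eq ?_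
    simp [eval_legendreSonin, eval_one_legendreP]
  · have anti : AntitoneOn (fun x => (legendreSonin n).eval x) (Set.Icc (-1) 0) := by
      refine antitoneOn_of_deriv_nonpos (convex_Icc _ _) (by fun_prop) (by fun_prop) fun x hx => ?_
      rw [interior_Icc] at hx
      rw [deriv_eq]
      exact mul_nonpos_of_nonpos_of_nonneg (by linarith [hx.2]) (sq_nonneg _)
    refine (anti (Set.left_mem_Icc.2 (by norm_num)) ⟨ht.1, h0⟩ ht.1).trans_eq ?_
    simp [eval_legendreSonin, eval_neg_one_legendreP, ← pow_mul]

theorem abs_eval_legendreP_le_one (n : ℕ) {t : ℝ} (ht : t ∈ Set.Icc (-1 : ℝ) 1) :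
    |(legendreP n).eval t| ≤ 1 := by
  rcases Nat.eq_zero_or_pos n with rfl | hn
  · rw [legendreP_zero, eval_one, abs_one]
  have hm : (0 : ℝ) < n * (n + 1) := by positivity
  have ht2 : 0 ≤ 1 - t ^ 2 := sub_nonneg.2 ((sq_le_one_iff_abs_le_one t).2 (abs_le.2 ht))
  have sonin := eval_legendreSonin_le n ht
  rw [eval_legendreSonin] at sonin
  have hsq : (n * (n + 1) : ℝ) * (legendreP n).eval t ^ 2 ≤ n * (n + 1) * 1 := by
    linarith [mul_nonneg ht2 (sq_nonneg ((derivative (legendreP n)).eval t))]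
  exact (sq_le_one_iff_abs_le_one _).1 (le_of_mul_le_mul_left hsq hm)

theorem contDiff_eval (p : ℝ[X]) : ContDiff ℝ 1 fun x => p.eval x := by
  simpa only [coe_aeval_eq_eval] using p.contDiff_aeval (𝕜 := ℝ) 1

theorem integral_mul_eval_derivative {h : ℝ → ℝ} (hh : ContDiff ℝ 1 h) (p : ℝ[X]) (a b : ℝ) :
    ∫ x in a..b, h x * (derivative p).eval x
      = h b * p.eval b - h a * p.eval a - ∫ x in a..b, deriv h x * p.eval x :=
  intervalIntegral.integral_mul_deriv_eq_deriv_mul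
    (fun x _ => (hh.differentiable one_ne_zero x).hasDerivAt) (fun x _ => p.hasDerivAt x)
    (hh.continuous_deriv_one.intervalIntegrable _ _)
    ((derivative p).continuous.intervalIntegrable _ _)

theorem integral_eval_mul_eval_derivative (p r : ℝ[X]) (a b : ℝ) :
    ∫ x in a..b, p.eval x * (derivative r).eval x
      = p.eval b * r.eval b - p.eval a * r.eval a
        - ∫ x in a..b, (derivative p).eval x * r.eval x := by
  simpa only [Polynomial.deriv] using integral_mul_eval_derivative (contDiff_eval p) r a b

theorem integral_iterate_derivative_mul {n m : ℕ} (hmn : m ≤ n) (p : ℝ[X]) :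
    ∫ x in (-1 : ℝ)..1, p.eval x * (derivative^[m] ((X ^ 2 - 1) ^ n)).eval x
      = (-1) ^ m *
        ∫ x in (-1 : ℝ)..1, (derivative^[m] p).eval x * ((X ^ 2 - 1 : ℝ[X]) ^ n).eval x := by
  induction m generalizing p with
  | zero => simp only [Function.iterate_zero, id_eq, pow_zero, one_mul]
  | succ m ih =>
    have dvd : (X ^ 2 - 1 : ℝ[X]) ∣ derivative^[m] ((X ^ 2 - 1) ^ n) :=
      (dvd_pow_self _ (by omega)).trans (pow_sub_dvd_iterate_derivative_pow _ n m)
    have root {a : ℝ} (ha : a ^ 2 = 1) : (derivative^[m] ((X ^ 2 - 1) ^ n)).eval a = 0 :=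
      eval_eq_zero_of_dvd_of_eval_eq_zero dvd
        (by rw [eval_sub, eval_pow, eval_X, eval_one, ha, sub_self])
    rw [Function.iterate_succ_apply', integral_eval_mul_eval_derivative, root (by norm_num),
      root (by norm_num), ih (by omega), ← Function.iterate_succ_apply]
    ring

theorem integral_mul_legendreP_eq_zero {n : ℕ} {p : ℝ[X]} (hp : p.natDegree < n) :
    ∫ x in (-1 : ℝ)..1, p.eval x * (legendreP n).eval x = 0 := by
  simp only [legendreP, eval_smul, mul_smul_comm, intervalIntegral.integral_smul,
    integral_iterate_derivative_mul le_rfl, iterate_derivative_eq_zero hp, eval_zero, zero_mul,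
    intervalIntegral.integral_zero, mul_zero, smul_zero]

theorem natDegree_legendreP (n : ℕ) : (legendreP n).natDegree = n :=
  natDegree_eq_of_degree_eq_some (degree_legendreP n)

theorem integral_legendreP_mul_legendreP {n k : ℕ} (hnk : n ≠ k) :
    ∫ x in (-1 : ℝ)..1, (legendreP n).eval x * (legendreP k).eval x = 0 := by
  wlog h : n < k generalizing n k
  · simpa only [mul_comm] using this hnk.symm (by omega)
  · exact integral_mul_legendreP_eq_zero (by rwa [natDegree_legendreP])

theorem integral_legendreP_sq (n : ℕ) :
    ∫ x in (-1 : ℝ)..1, (legendreP n).eval x ^ 2 = 2 / (2 * n + 1) := by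
  rcases n with _ | n
  · norm_num [legendreP_zero]
  have lower {k m : ℕ} (hkm : k ≤ m + 1) :
      ∫ x in (-1 : ℝ)..1, (derivative (legendreP k)).eval x * (legendreP (m + 1)).eval x = 0 :=
    integral_mul_legendreP_eq_zero
      (by have := natDegree_derivative_le (legendreP k); rw [natDegree_legendreP] at this; omega)
  have parts : ∫ x in (-1 : ℝ)..1,
      (legendreP (n + 1)).eval x * (derivative (legendreP (n + 2))).eval x = 2 := by
    rw [integral_eval_mul_eval_derivative, lower (Nat.le_succ _)]
    have sign : (-1 : ℝ) ^ n * (-1) ^ n = 1 := by rw [← mul_pow, neg_one_mul, neg_neg, one_pow]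
    simp only [eval_one_legendreP, eval_neg_one_legendreP, pow_succ, sub_zero]
    linear_combination sign
  have expand (x : ℝ) : (legendreP (n + 1)).eval x * (derivative (legendreP (n + 2))).eval x
      = (2 * n + 3) * (legendreP (n + 1)).eval x ^ 2
        + (derivative (legendreP n)).eval x * (legendreP (n + 1)).eval x := by
    simp only [derivative_legendreP_add_two, eval_add, eval_mul, eval_natCast, eval_ofNat]
    ring
  simp only [expand] at parts
  rw [intervalIntegral.integral_add (Continuous.intervalIntegrable (by fun_prop) _ _)
    (Continuous.intervalIntegrable (by fun_prop) _ _), intervalIntegral.integral_const_mul,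
    lower (by omega), add_zero] at parts
  rw [eq_div_iff (by positivity)]
  push_cast
  linear_combination parts

end LegendrePolynomials

section LegendreExpansion

open Polynomial

theorem legendreP_one : legendreP 1 = X := by
  have h := one_sub_X_sq_mul_derivative_legendreP 0
  rw [legendreP_zero, derivative_one, Nat.cast_zero, zero_add] at h
  linear_combination h

/-- The unnormalised Legendre coefficient `∫ g Pₙ` of `g` over `[-1, 1]`. -/
def legendreMoment (g : ℝ → ℝ) (n : ℕ) : ℝ :=
  ∫ x in (-1 : ℝ)..1, g x * (legendreP n).eval x

/-- The sum of the terms of degree less than `N` of the Fourier–Legendre series of `g`. -/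
def legendreSum (g : ℝ → ℝ) (N : ℕ) : ℝ[X] :=
  ∑ n ∈ Finset.range N, C ((2 * n + 1) / 2 * legendreMoment g n) * legendreP n

theorem eval_legendreSum (g : ℝ → ℝ) (N : ℕ) (t : ℝ) :
    (legendreSum g N).eval t
      = ∑ n ∈ Finset.range N, (2 * n + 1) / 2 * legendreMoment g n * (legendreP n).eval t := by
  simp only [legendreSum, eval_finsetSum, eval_mul, eval_C]

theorem eval_legendreSum_succ (g : ℝ → ℝ) (N : ℕ) (t : ℝ) :
    (legendreSum g (N + 1)).eval t = (legendreSum g N).eval t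
      + (2 * N + 1) / 2 * legendreMoment g N * (legendreP N).eval t := by
  rw [eval_legendreSum, Finset.sum_range_succ, ← eval_legendreSum]

theorem legendreMoment_add {g h : ℝ → ℝ} (hg : Continuous g) (hh : Continuous h) (n : ℕ) :
    legendreMoment (fun x => g x + h x) n = legendreMoment g n + legendreMoment h n := by
  simp only [legendreMoment, add_mul]
  exact intervalIntegral.integral_add (Continuous.intervalIntegrable (by fun_prop) _ _)
    (Continuous.intervalIntegrable (by fun_prop) _ _)

theorem legendreSum_add {g h : ℝ → ℝ} (hg : Continuous g) (hh : Continuous h) (N : ℕ) :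
    legendreSum (fun x => g x + h x) N = legendreSum g N + legendreSum h N := by
  simp only [legendreSum, legendreMoment_add hg hh, mul_add, C_add, add_mul,
    Finset.sum_add_distrib]

theorem legendreSum_const_mul (a : ℝ) (g : ℝ → ℝ) (N : ℕ) :
    legendreSum (fun x => a * g x) N = a • legendreSum g N := by
  have moment (n : ℕ) : legendreMoment (fun x => a * g x) n = a * legendreMoment g n := by
    simp only [legendreMoment, mul_assoc, intervalIntegral.integral_const_mul]
  simp only [legendreSum, moment, Finset.smul_sum, smul_eq_C_mul, mul_left_comm _ a, C_mul,
    mul_assoc]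

theorem legendreMoment_legendreP_self (n : ℕ) :
    legendreMoment (fun x => (legendreP n).eval x) n = 2 / (2 * n + 1) := by
  simp only [legendreMoment, ← sq, integral_legendreP_sq]

theorem legendreMoment_legendreP_of_ne {n k : ℕ} (hnk : n ≠ k) :
    legendreMoment (fun x => (legendreP n).eval x) k = 0 :=
  integral_legendreP_mul_legendreP hnk

theorem two_mul_add_one_div_two_mul (n : ℕ) : (2 * n + 1 : ℝ) / 2 * (2 / (2 * n + 1)) = 1 := by
  field_simp

theorem eventually_legendreSum_eval_eq (p : ℝ[X]) :
    ∀ᶠ N in atTop, legendreSum (fun x => p.eval x) N = p := by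
  have hp : p ∈ Submodule.span ℝ (Set.range legendreP) := span_range_legendreP ▸ Submodule.mem_top
  induction hp using Submodule.span_induction with
  | zero => simp [legendreSum, legendreMoment]
  | add p r _ _ hp hr =>
    filter_upwards [hp, hr] with N hpN hrN
    simp only [eval_add, legendreSum_add p.continuous r.continuous, hpN, hrN]
  | smul a p _ hp =>
    filter_upwards [hp] with N hpN
    simp only [eval_smul, smul_eq_mul, legendreSum_const_mul, hpN]
  | mem p hp =>
    obtain ⟨n, rfl⟩ := hp
    filter_upwards [eventually_gt_atTop n] with N hN
    rw [legendreSum, Finset.sum_eq_single_of_mem n (Finset.mem_range.2 hN)]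
    · rw [legendreMoment_legendreP_self, two_mul_add_one_div_two_mul, C_1, one_mul]
    · intro m _ hmn
      rw [legendreMoment_legendreP_of_ne hmn.symm, mul_zero, C_0, zero_mul]

theorem integral_mul_legendreSum {g : ℝ → ℝ} (hg : Continuous g) (k : ℝ → ℝ) (N : ℕ) :
    ∫ x in (-1 : ℝ)..1, g x * (legendreSum k N).eval x
      = ∑ n ∈ Finset.range N, (2 * n + 1) / 2 * legendreMoment k n * legendreMoment g n := by
  simp only [eval_legendreSum, Finset.mul_sum, mul_left_comm (g _)]
  rw [intervalIntegral.integral_finsetSum fun n _ =>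
    Continuous.intervalIntegrable (by fun_prop) _ _]
  simp only [intervalIntegral.integral_const_mul, legendreMoment]

theorem legendreMoment_legendreSum (g : ℝ → ℝ) {N n : ℕ} (hn : n < N) :
    legendreMoment (fun x => (legendreSum g N).eval x) n = legendreMoment g n := by
  have h := integral_mul_legendreSum (legendreP n).continuous g N
  rw [Finset.sum_eq_single_of_mem n (Finset.mem_range.2 hn) fun m _ hmn => by
      rw [legendreMoment_legendreP_of_ne hmn.symm, mul_zero],
    legendreMoment_legendreP_self, mul_right_comm, two_mul_add_one_div_two_mul, one_mul] at h
  simpa only [legendreMoment, mul_comm] using h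

theorem integral_legendreSum_sq_le {k : ℝ → ℝ} (hk : Continuous k) (N : ℕ) :
    ∫ x in (-1 : ℝ)..1, (legendreSum k N).eval x ^ 2 ≤ ∫ x in (-1 : ℝ)..1, k x ^ 2 := by
  set S := legendreSum k N with hS
  have proj : ∫ x in (-1 : ℝ)..1, k x * S.eval x = ∫ x in (-1 : ℝ)..1, S.eval x ^ 2 := by
    simp only [sq]
    rw [hS, integral_mul_legendreSum hk, integral_mul_legendreSum (legendreSum k N).continuous]
    exact Finset.sum_congr rfl fun n hn => by
      rw [legendreMoment_legendreSum k (Finset.mem_range.1 hn)]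
  have pythagoras : ∫ x in (-1 : ℝ)..1, (k x - S.eval x) ^ 2
      = (∫ x in (-1 : ℝ)..1, k x ^ 2) - ∫ x in (-1 : ℝ)..1, S.eval x ^ 2 := by
    calc ∫ x in (-1 : ℝ)..1, (k x - S.eval x) ^ 2
        = ∫ x in (-1 : ℝ)..1, (k x ^ 2 - 2 * (k x * S.eval x) + S.eval x ^ 2) := by
          congr 1; ext x; ring
      _ = (∫ x in (-1 : ℝ)..1, k x ^ 2) - 2 * (∫ x in (-1 : ℝ)..1, k x * S.eval x)
            + ∫ x in (-1 : ℝ)..1, S.eval x ^ 2 := by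
          rw [intervalIntegral.integral_add, intervalIntegral.integral_sub,
            intervalIntegral.integral_const_mul]
          all_goals exact Continuous.intervalIntegrable (by fun_prop) _ _
      _ = _ := by rw [proj]; ring
  linarith [intervalIntegral.integral_nonneg (μ := volume) (show (-1 : ℝ) ≤ 1 by norm_num)
    fun x _ => sq_nonneg (k x - S.eval x)]

theorem abs_legendreMoment_le {k : ℝ → ℝ} {ε : ℝ} (hk : ∀ x ∈ Set.Icc (-1 : ℝ) 1, |k x| ≤ ε)
    (n : ℕ) : |legendreMoment k n| ≤ 2 * ε := by
  have bound : ∀ x ∈ Set.uIoc (-1 : ℝ) 1, ‖k x * (legendreP n).eval x‖ ≤ ε := fun x hx => by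
    rw [Set.uIoc_of_le (by norm_num)] at hx
    have hx' := Set.Ioc_subset_Icc_self hx
    rw [norm_mul]
    exact (mul_le_of_le_one_right (norm_nonneg _) (abs_eval_legendreP_le_one n hx')).trans
      (hk x hx')
  refine (intervalIntegral.norm_integral_le_of_norm_le_const bound).trans_eq ?_
  norm_num [mul_comm]

theorem legendreMoment_zero_of_deriv {h : ℝ → ℝ} (hh : ContDiff ℝ 1 h) (h0 : h (-1) = 0) :
    legendreMoment h 0 = legendreMoment (deriv h) 0 - legendreMoment (deriv h) 1 := by
  have parts₁ := integral_mul_eval_derivative hh (legendreP 1) (-1) 1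
  have parts₀ := integral_mul_eval_derivative hh (legendreP 0) (-1) 1
  simp only [legendreP_zero, legendreP_one, derivative_X, derivative_one, eval_X, eval_one,
    eval_zero, mul_one, mul_zero, intervalIntegral.integral_zero, h0, zero_mul, sub_zero]
    at parts₁ parts₀
  simp only [legendreMoment, legendreP_zero, legendreP_one, eval_X, eval_one, mul_one]
  linear_combination parts₁ - parts₀

theorem legendreMoment_succ_of_deriv {h : ℝ → ℝ} (hh : ContDiff ℝ 1 h) (n : ℕ) :
    (2 * n + 3) * legendreMoment h (n + 1)
      = legendreMoment (deriv h) n - legendreMoment (deriv h) (n + 2) := by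
  have hc := hh.continuous
  have parts₂ := integral_mul_eval_derivative hh (legendreP (n + 2)) (-1) 1
  have parts₀ := integral_mul_eval_derivative hh (legendreP n) (-1) 1
  have split : ∫ x in (-1 : ℝ)..1, h x * (derivative (legendreP (n + 2))).eval x
      = (2 * n + 3) * legendreMoment h (n + 1)
        + ∫ x in (-1 : ℝ)..1, h x * (derivative (legendreP n)).eval x := by
    simp only [legendreMoment, derivative_legendreP_add_two, eval_add, eval_mul, eval_natCast,
      eval_ofNat, mul_add, mul_left_comm (h _)]
    rw [intervalIntegral.integral_add, intervalIntegral.integral_const_mul]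
    all_goals exact Continuous.intervalIntegrable (by fun_prop) _ _
  rw [split, parts₀] at parts₂
  simp only [eval_one_legendreP, eval_neg_one_legendreP, pow_add] at parts₂
  simp only [legendreMoment] at parts₂ ⊢
  linear_combination parts₂

theorem integral_legendreP_succ (n : ℕ) (t : ℝ) :
    (2 * n + 3) * ∫ x in (-1 : ℝ)..t, (legendreP (n + 1)).eval x
      = (legendreP (n + 2)).eval t - (legendreP n).eval t := by
  have ftc := intervalIntegral.integral_eq_sub_of_hasDerivAt (a := -1) (b := t)
    (fun x _ => (legendreP (n + 2) - legendreP n).hasDerivAt x)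
    ((derivative (legendreP (n + 2) - legendreP n)).continuous.intervalIntegrable _ _)
  simp only [derivative_sub, derivative_legendreP_add_two, add_sub_cancel_right, eval_sub, eval_mul,
    eval_add, eval_natCast, eval_ofNat, intervalIntegral.integral_const_mul,
    eval_neg_one_legendreP, pow_add] at ftc
  linear_combination ftc

theorem eval_legendreSum_eq_integral_deriv {h : ℝ → ℝ} (hh : ContDiff ℝ 1 h) (h0 : h (-1) = 0)
    (N : ℕ) (t : ℝ) :
    (legendreSum h (N + 1)).eval t
      = (∫ x in (-1 : ℝ)..t, (legendreSum (deriv h) (N + 1)).eval x)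
        - (legendreMoment (deriv h) N * (legendreP (N + 1)).eval t
          + legendreMoment (deriv h) (N + 1) * (legendreP N).eval t) / 2 := by
  induction N with
  | zero =>
    simp only [eval_legendreSum, zero_add, Finset.sum_range_one, legendreP_zero, legendreP_one,
      eval_one, eval_X, legendreMoment_zero_of_deriv hh h0, intervalIntegral.integral_const,
      smul_eq_mul]
    ring
  | succ N ih =>
    have next : ∫ x in (-1 : ℝ)..t, (legendreSum (deriv h) (N + 1 + 1)).eval x
        = (∫ x in (-1 : ℝ)..t, (legendreSum (deriv h) (N + 1)).eval x)
          + legendreMoment (deriv h) (N + 1) / 2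
            * ((2 * N + 3) * ∫ x in (-1 : ℝ)..t, (legendreP (N + 1)).eval x) := by
      simp only [eval_legendreSum_succ (deriv h) (N + 1)]
      rw [intervalIntegral.integral_add, intervalIntegral.integral_const_mul]
      · push_cast
        ring
      all_goals exact Continuous.intervalIntegrable (by fun_prop) _ _
    have moment := legendreMoment_succ_of_deriv hh N
    rw [eval_legendreSum_succ, ih, next, integral_legendreP_succ]
    push_cast
    linear_combination (legendreP (N + 1)).eval t / 2 * moment

theorem abs_integral_legendreSum_le {k : ℝ → ℝ} (hk : Continuous k) {ε : ℝ} (hε : 0 < ε)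
    (hkε : ∀ x ∈ Set.Icc (-1 : ℝ) 1, |k x| ≤ ε) (N : ℕ) {t : ℝ} (ht : t ∈ Set.Icc (-1 : ℝ) 1) :
    |∫ x in (-1 : ℝ)..t, (legendreSum k N).eval x| ≤ 2 * ε := by
  set S := legendreSum k N
  have hS : Continuous fun x => |S.eval x| := S.continuous.abs
  have energy : ∫ x in (-1 : ℝ)..1, S.eval x ^ 2 ≤ 2 * ε ^ 2 := by
    refine (integral_legendreSum_sq_le hk N).trans ?_
    refine (intervalIntegral.integral_mono_on (g := fun _ => ε ^ 2) (by norm_num)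
      (Continuous.intervalIntegrable (by fun_prop) _ _) intervalIntegrable_const
      fun x hx => sq_le_sq.2 ((hkε x hx).trans (le_abs_self ε))).trans_eq ?_
    norm_num
  have amgm (x : ℝ) : |S.eval x| ≤ ε / 2 + 1 / (2 * ε) * S.eval x ^ 2 := by
    have h : ε / 2 + 1 / (2 * ε) * S.eval x ^ 2 - |S.eval x|
        = 1 / (2 * ε) * (|S.eval x| - ε) ^ 2 := by
      rw [← sq_abs (S.eval x)]
      field_simp
      ring
    exact sub_nonneg.1 (h ▸ by positivity)
  calc |∫ x in (-1 : ℝ)..t, S.eval x|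
      ≤ ∫ x in (-1 : ℝ)..t, |S.eval x| := intervalIntegral.abs_integral_le_integral_abs ht.1
    _ ≤ ∫ x in (-1 : ℝ)..1, |S.eval x| :=
        intervalIntegral.integral_mono_interval le_rfl ht.1 ht.2
          (Eventually.of_forall fun x => abs_nonneg _) (hS.intervalIntegrable _ _)
    _ ≤ ∫ x in (-1 : ℝ)..1, (ε / 2 + 1 / (2 * ε) * S.eval x ^ 2) :=
        intervalIntegral.integral_mono_on (by norm_num) (hS.intervalIntegrable _ _)
          (Continuous.intervalIntegrable (by fun_prop) _ _) fun x _ => amgm x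
    _ = ε + 1 / (2 * ε) * ∫ x in (-1 : ℝ)..1, S.eval x ^ 2 := by
        rw [intervalIntegral.integral_add intervalIntegrable_const
            (Continuous.intervalIntegrable (by fun_prop) _ _),
          intervalIntegral.integral_const_mul, intervalIntegral.integral_const, smul_eq_mul]
        ring
    _ ≤ ε + 1 / (2 * ε) * (2 * ε ^ 2) := by gcongr
    _ = 2 * ε := by field_simp; ring

theorem abs_eval_legendreSum_le {h : ℝ → ℝ} (hh : ContDiff ℝ 1 h) (h0 : h (-1) = 0) {ε : ℝ}
    (hε : 0 < ε) (hhε : ∀ x ∈ Set.Icc (-1 : ℝ) 1, |deriv h x| ≤ ε) (N : ℕ) {t : ℝ}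
    (ht : t ∈ Set.Icc (-1 : ℝ) 1) : |(legendreSum h N).eval t| ≤ 4 * ε := by
  rcases N with _ | N
  · rw [eval_legendreSum, Finset.sum_range_zero, abs_zero]
    positivity
  have main := abs_integral_legendreSum_le hh.continuous_deriv_one hε hhε (N + 1) ht
  have boundary (n m : ℕ) : |legendreMoment (deriv h) n * (legendreP m).eval t| ≤ 2 * ε := by
    rw [abs_mul]
    exact (mul_le_of_le_one_right (abs_nonneg _) (abs_eval_legendreP_le_one m ht)).trans
      (abs_legendreMoment_le hhε n)
  have b₁ := abs_le.1 (boundary N (N + 1))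
  have b₂ := abs_le.1 (boundary (N + 1) N)
  rw [eval_legendreSum_eq_integral_deriv hh h0, abs_le]
  constructor <;> linarith [(abs_le.1 main).1, (abs_le.1 main).2]

theorem exists_derivative_eq (p : ℝ[X]) : ∃ r : ℝ[X], derivative r = p := by
  induction p using Polynomial.induction_on' with
  | add p r hp hr =>
    obtain ⟨P, rfl⟩ := hp
    obtain ⟨R, rfl⟩ := hr
    exact ⟨P + R, derivative_add⟩
  | monomial n a =>
    refine ⟨monomial (n + 1) (a / (n + 1)), ?_⟩
    rw [derivative_monomial, Nat.add_sub_cancel]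
    push_cast
    rw [div_mul_cancel₀ a (by positivity)]

theorem exists_polynomial_deriv_near {g : ℝ → ℝ} (hg : ContDiff ℝ 1 g) {ε : ℝ} (hε : 0 < ε) :
    ∃ p : ℝ[X], p.eval (-1) = g (-1) ∧
      ∀ x ∈ Set.Icc (-1 : ℝ) 1, |deriv (fun y => g y - p.eval y) x| ≤ ε := by
  obtain ⟨r, hr⟩ :=
    exists_polynomial_near_of_continuousOn (-1) 1 _ hg.continuous_deriv_one.continuousOn ε hε
  obtain ⟨R, rfl⟩ := exists_derivative_eq r
  refine ⟨R + C (g (-1) - R.eval (-1)), by simp only [eval_add, eval_C, add_sub_cancel],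
    fun x hx => ?_⟩
  rw [deriv_fun_sub (hg.differentiable one_ne_zero x) (Polynomial.differentiableAt _),
    Polynomial.deriv, derivative_add, derivative_C, add_zero, abs_sub_comm]
  exact (hr x hx).le

theorem tendstoUniformlyOn_legendreSum {g : ℝ → ℝ} (hg : ContDiff ℝ 1 g) :
    TendstoUniformlyOn (fun N t => (legendreSum g N).eval t) g atTop (Set.Icc (-1) 1) := by
  rw [Metric.tendstoUniformlyOn_iff]
  intro ε hε
  obtain ⟨p, hp, hgp⟩ := exists_polynomial_deriv_near hg (ε := ε / 10) (by positivity)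
  set h : ℝ → ℝ := fun y => g y - p.eval y with h_def
  have hh : ContDiff ℝ 1 h := hg.sub (contDiff_eval p)
  have h0 : h (-1) = 0 := sub_eq_zero.2 hp.symm
  filter_upwards [eventually_legendreSum_eval_eq p] with N hN t ht
  have split : legendreSum g N = legendreSum h N + p := by
    conv_rhs => rw [← hN, ← legendreSum_add hh.continuous p.continuous]
    simp only [h_def, sub_add_cancel]
  have partial_le := abs_eval_legendreSum_le hh h0 (by positivity) hgp N ht
  have h_le : ‖h t‖ ≤ ε / 10 * 2 := by
    have mvt := (convex_Icc (-1 : ℝ) 1).norm_image_sub_le_of_norm_deriv_le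
      (fun x _ => hh.differentiable one_ne_zero x) hgp (Set.left_mem_Icc.2 (by norm_num)) ht
    rw [h0, sub_zero] at mvt
    refine mvt.trans ?_
    gcongr
    exact abs_le.2 ⟨by linarith [ht.1], by linarith [ht.2]⟩
  calc dist (g t) ((legendreSum g N).eval t) = |h t - (legendreSum h N).eval t| := by
        rw [Real.dist_eq, split, eval_add, h_def]
        congr 1
        ring
    _ ≤ |h t| + |(legendreSum h N).eval t| := abs_sub _ _
    _ ≤ ε / 10 * 2 + 4 * (ε / 10) := add_le_add h_le partial_le
    _ < ε := by linarith

theorem tendstoUniformlyOn_legendreSeries {g : ℝ → ℂ} (hg : ContDiff ℝ 1 g) :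
    TendstoUniformlyOn
      (fun (N : ℕ) (t : ℝ) => ∑ n ∈ Finset.range N,
        ((2 * n + 1) / 2 * ∫ z in (-1 : ℝ)..1, g z * ((legendreP n).eval z : ℝ))
          * ((legendreP n).eval t : ℝ))
      g atTop (Set.Icc (-1) 1) := by
  have integrable (n : ℕ) :
      IntervalIntegrable (fun z => g z * ((legendreP n).eval z : ℝ)) volume (-1) 1 :=
    Continuous.intervalIntegrable (by have := hg.continuous; fun_prop) _ _
  have moment (n : ℕ) : ∫ z in (-1 : ℝ)..1, g z * ((legendreP n).eval z : ℝ)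
      = legendreMoment (fun x => (g x).re) n + legendreMoment (fun x => (g x).im) n * I := by
    have re := reCLM.intervalIntegral_comp_comm (integrable n)
    have im := imCLM.intervalIntegral_comp_comm (integrable n)
    simp only [reCLM_apply, imCLM_apply, re_mul_ofReal, im_mul_ofReal] at re im
    rw [legendreMoment, legendreMoment, re, im, re_add_im]
  have hre := tendstoUniformlyOn_legendreSum (g := fun x => (g x).re) (reCLM.contDiff.comp hg)
  have him := tendstoUniformlyOn_legendreSum (g := fun x => (g x).im) (imCLM.contDiff.comp hg)
  refine (((ofRealCLM.uniformContinuous.comp_tendstoUniformlyOn hre).add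
    (((1 : ℝ →L[ℝ] ℝ).smulRight I).uniformContinuous.comp_tendstoUniformlyOn him)).congr
      (Eventually.of_forall fun N t _ => ?_)).congr_right fun t _ => re_add_im (g t)
  simp only [Pi.add_apply, Function.comp_apply, ofRealCLM_apply,
    ContinuousLinearMap.smulRight_apply, one_apply_eq_self, real_smul, eval_legendreSum, moment]
  push_cast
  rw [Finset.sum_mul, ← Finset.sum_add_distrib]
  exact Finset.sum_congr rfl fun n _ => by ring

end LegendreExpansion

section PartialDerivatives

variable {E : Type*} [NormedAddCommGroup E] [NormedSpace ℝ E]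

theorem hasStrictFDerivAt_uncurry_of_hasDerivAt {F F₁ F₂ : ℝ → ℝ → E}
    (h₁ : ∀ x y, HasDerivAt (fun s => F s y) (F₁ x y) x)
    (h₂ : ∀ x y, HasDerivAt (fun s => F x s) (F₂ x y) y)
    (hF₁ : Continuous (Function.uncurry F₁)) (hF₂ : Continuous (Function.uncurry F₂))
    (p : ℝ × ℝ) :
    HasStrictFDerivAt (Function.uncurry F)
      ((ContinuousLinearMap.toSpanSingleton ℝ (F₁ p.1 p.2)).coprod
        (ContinuousLinearMap.toSpanSingleton ℝ (F₂ p.1 p.2))) p :=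
  hasStrictFDerivAt_uncurry_coprod
    (f₁ := fun x y => ContinuousLinearMap.toSpanSingleton ℝ (F₁ x y))
    (f₂ := fun x y => ContinuousLinearMap.toSpanSingleton ℝ (F₂ x y))
    (Eventually.of_forall fun v => (h₁ v.1 v.2).hasFDerivAt)
    (Eventually.of_forall fun v => (h₂ v.1 v.2).hasFDerivAt)
    ((ContinuousLinearMap.toSpanSingletonCLE (𝕜 := ℝ)).continuous.comp hF₁).continuousAt
    ((ContinuousLinearMap.toSpanSingletonCLE (𝕜 := ℝ)).continuous.comp hF₂).continuousAt

theorem contDiff_one_uncurry_of_hasDerivAt {F F₁ F₂ : ℝ → ℝ → E}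
    (h₁ : ∀ x y, HasDerivAt (fun s => F s y) (F₁ x y) x)
    (h₂ : ∀ x y, HasDerivAt (fun s => F x s) (F₂ x y) y)
    (hF₁ : Continuous (Function.uncurry F₁)) (hF₂ : Continuous (Function.uncurry F₂)) :
    ContDiff ℝ 1 (Function.uncurry F) := by
  have strict := hasStrictFDerivAt_uncurry_of_hasDerivAt h₁ h₂ hF₁ hF₂
  refine contDiff_one_iff_hasFDerivAt.2
    ⟨_, continuous_clm_apply.2 fun v => ?_, fun p => (strict p).hasFDerivAt⟩
  exact (hF₁.const_smul v.1).add (hF₂.const_smul v.2)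

theorem hasDerivAt_integral_param {G G₁ : ℝ → ℝ → E} (hG : Continuous (Function.uncurry G))
    (hG₁ : Continuous (Function.uncurry G₁))
    (hd : ∀ x y, HasDerivAt (fun s => G s y) (G₁ x y) x) (a c x : ℝ) :
    HasDerivAt (fun s => ∫ y in a..c, G s y) (∫ y in a..c, G₁ x y) x := by
  obtain ⟨C, hC⟩ := (isCompact_Icc (a := x - 1) (b := x + 1)).prod
    (isCompact_uIcc (a := a) (b := c)) |>.exists_bound_of_continuousOn hG₁.continuousOn
  refine (intervalIntegral.hasDerivAt_integral_of_dominated_loc_of_deriv_le (F' := G₁)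
    (bound := fun _ => C) (Icc_mem_nhds (sub_one_lt x) (lt_add_one x))
    (Eventually.of_forall fun z => (hG.uncurry_left z).aestronglyMeasurable)
    ((hG.uncurry_left x).intervalIntegrable _ _) (hG₁.uncurry_left x).aestronglyMeasurable
    (Eventually.of_forall fun y hy z hz => hC (z, y) ⟨hz, Set.uIoc_subset_uIcc hy⟩)
    intervalIntegrable_const (Eventually.of_forall fun y _ z _ => hd z y)).2

theorem hasDerivAt_integral_self [CompleteSpace E] {G G₁ : ℝ → ℝ → E}
    (hG : Continuous (Function.uncurry G)) (hG₁ : Continuous (Function.uncurry G₁))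
    (hd : ∀ x y, HasDerivAt (fun s => G s y) (G₁ x y) x) (a x : ℝ) :
    HasDerivAt (fun s => ∫ y in a..s, G s y) (G x x + ∫ y in a..x, G₁ x y) x := by
  have partials := hasStrictFDerivAt_uncurry_of_hasDerivAt
    (F := fun s r => ∫ y in a..r, G s y) (F₁ := fun s r => ∫ y in a..r, G₁ s y) (F₂ := G)
    (fun s r => hasDerivAt_integral_param hG hG₁ hd a r s)
    (fun s r => ((hG.uncurry_left s).integral_hasStrictDerivAt a r).hasDerivAt)
    (intervalIntegral.continuous_parametric_intervalIntegral_of_continuous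
      (f := fun (p : ℝ × ℝ) y => G₁ p.1 y)
      (hG₁.comp (by fun_prop : Continuous fun r : (ℝ × ℝ) × ℝ => (r.1.1, r.2))) continuous_snd)
    hG (x, x)
  refine (partials.hasFDerivAt.comp_hasDerivAt (f := fun s => (s, s)) x
    ((hasDerivAt_id' x).prodMk (hasDerivAt_id' x))).congr_deriv ?_
  simp only [ContinuousLinearMap.coprod_apply, ContinuousLinearMap.toSpanSingleton_apply, one_smul]
  exact add_comm _ _

end PartialDerivatives

section Goursat

theorem continuous_integral_integral {F : ℝ → ℝ → ℂ} (hF : Continuous (Function.uncurry F)) :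
    Continuous fun p : ℝ × ℝ => ∫ α in (0 : ℝ)..p.1, ∫ β in (0 : ℝ)..p.2, F α β := by
  refine intervalIntegral.continuous_parametric_intervalIntegral_of_continuous
    (f := fun (p : ℝ × ℝ) α => ∫ β in (0 : ℝ)..p.2, F α β) ?_ continuous_fst
  exact intervalIntegral.continuous_parametric_intervalIntegral_of_continuous
    (f := fun (r : (ℝ × ℝ) × ℝ) β => F r.2 β)
    (hF.comp (by fun_prop : Continuous fun r : ((ℝ × ℝ) × ℝ) × ℝ => (r.1.2, r.2))) (by fun_prop)

theorem abs_le_of_mem_uIoc_zero {r s R : ℝ} (hr : r ∈ Set.uIoc 0 s) (hs : |s| ≤ R) : |r| ≤ R := by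
  have h := Set.abs_sub_left_of_mem_uIcc (Set.uIoc_subset_uIcc hr)
  rw [sub_zero, sub_zero] at h
  exact h.trans hs

/-- The terms of the Neumann series of `H ξ η = g ξ η + ∫₀^ξ ∫₀^η V H`. -/
def goursatIterate (V g : ℝ → ℝ → ℂ) : ℕ → ℝ → ℝ → ℂ
  | 0 => g
  | n + 1 => fun ξ η => ∫ α in (0 : ℝ)..ξ, ∫ β in (0 : ℝ)..η, V α β * goursatIterate V g n α β

theorem continuous_goursatIterate {V g : ℝ → ℝ → ℂ} (hV : Continuous (Function.uncurry V))
    (hg : Continuous (Function.uncurry g)) (n : ℕ) :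
    Continuous (Function.uncurry (goursatIterate V g n)) := by
  induction n with
  | zero => exact hg
  | succ n ih => exact continuous_integral_integral (hV.mul ih)

theorem norm_goursatIterate_le {V g : ℝ → ℝ → ℂ} (hV : Continuous (Function.uncurry V))
    (hg : Continuous (Function.uncurry g)) {R M C : ℝ}
    (hM : ∀ ξ η, |ξ| ≤ R → |η| ≤ R → ‖V ξ η‖ ≤ M) (hC : ∀ ξ η, |ξ| ≤ R → |η| ≤ R → ‖g ξ η‖ ≤ C)
    (n : ℕ) {ξ η : ℝ} (hξ : |ξ| ≤ R) (hη : |η| ≤ R) :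
    ‖goursatIterate V g n ξ η‖ ≤ C * (M * R * |ξ|) ^ n / n.factorial := by
  have hR : 0 ≤ R := (abs_nonneg ξ).trans hξ
  have hM0 : 0 ≤ M := (norm_nonneg _).trans (hM ξ η hξ hη)
  induction n generalizing ξ η with
  | zero => simpa [goursatIterate] using hC ξ η hξ hη
  | succ n ih =>
    set J : ℝ → ℂ := fun α => ∫ β in (0 : ℝ)..η, V α β * goursatIterate V g n α β
    have J_cont : Continuous J :=
      intervalIntegral.continuous_parametric_intervalIntegral_of_continuous
        (f := fun α β => V α β * goursatIterate V g n α β)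
        (hV.mul (continuous_goursatIterate hV hg n)) continuous_const
    have J_le : ∀ α ∈ Set.uIoc 0 ξ,
        ‖J α‖ ≤ C * (M * R) ^ (n + 1) / n.factorial * |α - 0| ^ n := fun α hα => by
      have hα' : |α| ≤ R := abs_le_of_mem_uIoc_zero hα hξ
      have integrand_le : ∀ β ∈ Set.uIoc 0 η, ‖V α β * goursatIterate V g n α β‖
          ≤ M * (C * (M * R * |α|) ^ n / n.factorial) := fun β hβ => by
        have hβ' : |β| ≤ R := abs_le_of_mem_uIoc_zero hβ hη
        rw [norm_mul]
        exact mul_le_mul (hM α β hα' hβ') (ih hα' hβ') (norm_nonneg _) hM0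
      calc ‖J α‖ ≤ M * (C * (M * R * |α|) ^ n / n.factorial) * |η - 0| :=
            intervalIntegral.norm_integral_le_of_norm_le_const integrand_le
        _ ≤ M * (C * (M * R * |α|) ^ n / n.factorial) * R := by
            have hC0 : 0 ≤ C := (norm_nonneg _).trans (hC ξ η hξ hη)
            rw [sub_zero]
            gcongr
        _ = C * (M * R) ^ (n + 1) / n.factorial * |α - 0| ^ n := by
            rw [sub_zero]
            ring
    calc ‖∫ α in (0 : ℝ)..ξ, J α‖ ≤ ∫ α in Set.uIoc 0 ξ, ‖J α‖ :=
          intervalIntegral.norm_integral_le_integral_norm_uIoc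
      _ ≤ ∫ α in Set.uIoc 0 ξ, C * (M * R) ^ (n + 1) / n.factorial * |α - 0| ^ n :=
          setIntegral_mono_on (J_cont.norm.intervalIntegrable 0 ξ).def'
            (Continuous.intervalIntegrable (by fun_prop) 0 ξ).def' measurableSet_uIoc J_le
      _ = C * (M * R * |ξ|) ^ (n + 1) / (n + 1).factorial := by
          rw [integral_const_mul, integral_pow_abs_sub_uIoc, sub_zero, Nat.factorial_succ]
          push_cast
          field_simp
          ring

theorem exists_summable_goursatIterate_bound {V g : ℝ → ℝ → ℂ}
    (hV : Continuous (Function.uncurry V)) (hg : Continuous (Function.uncurry g)) (R : ℝ) :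
    ∃ c : ℕ → ℝ, Summable c ∧
      ∀ n ξ η, |ξ| ≤ R → |η| ≤ R → ‖goursatIterate V g n ξ η‖ ≤ c n := by
  obtain ⟨M, hM⟩ := (isCompact_closedBall (0 : ℝ × ℝ) R).exists_bound_of_continuousOn
    hV.continuousOn
  obtain ⟨C, hC⟩ := (isCompact_closedBall (0 : ℝ × ℝ) R).exists_bound_of_continuousOn
    hg.continuousOn
  have mem_ball {ξ η : ℝ} (hξ : |ξ| ≤ R) (hη : |η| ≤ R) : (ξ, η) ∈ Metric.closedBall 0 R :=
    mem_closedBall_zero_iff.2 (norm_prod_le_iff.2 ⟨hξ, hη⟩)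
  refine ⟨fun n => C * ((M * R * R) ^ n / n.factorial),
    (Real.summable_pow_div_factorial _).mul_left C, fun n ξ η hξ hη => ?_⟩
  have hR : 0 ≤ R := (abs_nonneg ξ).trans hξ
  have hM0 : 0 ≤ M := (norm_nonneg _).trans (hM _ (mem_ball hξ hη))
  have hC0 : 0 ≤ C := (norm_nonneg _).trans (hC _ (mem_ball hξ hη))
  refine (norm_goursatIterate_le hV hg (fun ξ η hξ hη => hM _ (mem_ball hξ hη))
    (fun ξ η hξ hη => hC _ (mem_ball hξ hη)) n hξ hη).trans ?_
  calc C * (M * R * |ξ|) ^ n / n.factorial ≤ C * (M * R * R) ^ n / n.factorial := by gcongr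
    _ = C * ((M * R * R) ^ n / n.factorial) := mul_div_assoc _ _ _

theorem hasSum_intervalIntegral_of_norm_le {F : ℕ → ℝ → ℂ} (hF : ∀ n, Continuous (F n))
    {c : ℕ → ℝ} (hc : Summable c) {a b : ℝ} (hFc : ∀ n, ∀ t ∈ Set.uIoc a b, ‖F n t‖ ≤ c n) :
    HasSum (fun n => ∫ t in a..b, F n t) (∫ t in a..b, ∑' n, F n t) :=
  intervalIntegral.hasSum_integral_of_dominated_convergence (fun n _ => c n)
    (fun n => (hF n).aestronglyMeasurable) (fun n => Eventually.of_forall (hFc n))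
    (Eventually.of_forall fun _ _ => hc) intervalIntegrable_const
    (Eventually.of_forall fun t ht =>
      (Summable.of_norm_bounded hc fun n => hFc n t ht).hasSum)

theorem hasSum_integral_integral_of_norm_le {F : ℕ → ℝ → ℝ → ℂ}
    (hF : ∀ n, Continuous (Function.uncurry (F n))) {c : ℕ → ℝ} (hc : Summable c) {ξ η : ℝ}
    (hFc : ∀ n, ∀ α ∈ Set.uIoc 0 ξ, ∀ β ∈ Set.uIoc 0 η, ‖F n α β‖ ≤ c n) :
    HasSum (fun n => ∫ α in (0 : ℝ)..ξ, ∫ β in (0 : ℝ)..η, F n α β)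
      (∫ α in (0 : ℝ)..ξ, ∫ β in (0 : ℝ)..η, ∑' n, F n α β) := by
  have inner : ∀ α ∈ Set.uIoc 0 ξ,
      ∫ β in (0 : ℝ)..η, ∑' n, F n α β = ∑' n, ∫ β in (0 : ℝ)..η, F n α β := fun α hα =>
    (hasSum_intervalIntegral_of_norm_le (fun n => (hF n).uncurry_left α) hc
      fun n => hFc n α hα).tsum_eq.symm
  rw [intervalIntegral.integral_congr_ae (Eventually.of_forall inner)]
  exact hasSum_intervalIntegral_of_norm_le
    (fun n => intervalIntegral.continuous_parametric_intervalIntegral_of_continuous (hF n)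
      continuous_const) (hc.mul_right |η - 0|) fun n α hα =>
    intervalIntegral.norm_integral_le_of_norm_le_const (hFc n α hα)

theorem continuous_tsum_goursatIterate {V g : ℝ → ℝ → ℂ} (hV : Continuous (Function.uncurry V))
    (hg : Continuous (Function.uncurry g)) :
    Continuous fun p : ℝ × ℝ => ∑' n, goursatIterate V g n p.1 p.2 := by
  refine continuous_iff_continuousAt.2 fun p => ?_
  obtain ⟨c, hc, hle⟩ := exists_summable_goursatIterate_bound hV hg (‖p‖ + 1)
  refine (continuousOn_tsum (s := Metric.closedBall 0 (‖p‖ + 1))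
    (fun n => (continuous_goursatIterate hV hg n).continuousOn) hc fun n r hr => ?_).continuousAt
    (Metric.closedBall_mem_nhds_of_mem (by simp))
  have hr' := norm_prod_le_iff.1 (mem_closedBall_zero_iff.1 hr)
  exact hle n r.1 r.2 hr'.1 hr'.2

theorem exists_continuous_goursat_solution {V g : ℝ → ℝ → ℂ}
    (hV : Continuous (Function.uncurry V)) (hg : Continuous (Function.uncurry g)) :
    ∃ H : ℝ → ℝ → ℂ, Continuous (Function.uncurry H) ∧
      ∀ ξ η, H ξ η = g ξ η + ∫ α in (0 : ℝ)..ξ, ∫ β in (0 : ℝ)..η, V α β * H α β := by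
  refine ⟨fun ξ η => ∑' n, goursatIterate V g n ξ η, continuous_tsum_goursatIterate hV hg,
    fun ξ η => ?_⟩
  obtain ⟨c, hc, hle⟩ := exists_summable_goursatIterate_bound hV hg (max |ξ| |η|)
  obtain ⟨M, hM⟩ := (isCompact_uIcc (a := 0) (b := ξ)).prod (isCompact_uIcc (a := 0) (b := η))
    |>.exists_bound_of_continuousOn hV.continuousOn
  have terms := hasSum_integral_integral_of_norm_le (ξ := ξ) (η := η)
    (F := fun n α β => V α β * goursatIterate V g n α β)
    (fun n => hV.mul (continuous_goursatIterate hV hg n)) (hc.mul_left M) fun n α hα β hβ => by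
      have hVM := hM (α, β) ⟨Set.uIoc_subset_uIcc hα, Set.uIoc_subset_uIcc hβ⟩
      refine (norm_mul_le _ _).trans (mul_le_mul hVM (hle n α β ?_ ?_) (norm_nonneg _)
        ((norm_nonneg _).trans hVM))
      · exact abs_le_of_mem_uIoc_zero hα (le_max_left _ _)
      · exact abs_le_of_mem_uIoc_zero hβ (le_max_right _ _)
  have summable : Summable fun n => goursatIterate V g n ξ η :=
    Summable.of_norm_bounded hc fun n => hle n ξ η (le_max_left _ _) (le_max_right _ _)
  calc ∑' n, goursatIterate V g n ξ η = g ξ η + ∑' n, goursatIterate V g (n + 1) ξ η :=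
        summable.tsum_eq_zero_add
    _ = _ := by
        simp only [← tsum_mul_left]
        exact congrArg (g ξ η + ·) terms.tsum_eq

end Goursat

/-- `H` is the transmutation kernel in the characteristic coordinates `ξ = (x + t) / 2`,
`η = (x - t) / 2`: it solves `∂ξ ∂η H = q (ξ + η) H`, `∂ξ H ξ 0 = q ξ / 2`, `H 0 η = 0`. The problem
is encoded as an integral equation, which needs `H` to be continuous only. -/
structure IsGoursatKernel (q : ℝ → ℂ) (H : ℝ → ℝ → ℂ) : Prop where
  continuous : Continuous (Function.uncurry H)
  eq_integral : ∀ ξ η, H ξ η = (∫ s in (0 : ℝ)..ξ, q s) / 2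
    + ∫ α in (0 : ℝ)..ξ, ∫ β in (0 : ℝ)..η, q (α + β) * H α β

theorem exists_isGoursatKernel {q : ℝ → ℂ} (hq : Continuous q) :
    ∃ H : ℝ → ℝ → ℂ, IsGoursatKernel q H := by
  obtain ⟨H, hH, h⟩ := exists_continuous_goursat_solution
    (V := fun α β => q (α + β)) (g := fun ξ _ => (∫ s in (0 : ℝ)..ξ, q s) / 2)
    (hq.comp continuous_add)
    (((intervalIntegral.continuous_primitive (fun a b => hq.intervalIntegrable a b) 0).comp
      continuous_fst).div_const 2)
  exact ⟨H, hH, h⟩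

/-- The derivative `∂η H` of a Goursat kernel `H`. -/
def goursatDeriv (q : ℝ → ℂ) (H : ℝ → ℝ → ℂ) (ξ η : ℝ) : ℂ :=
  ∫ α in (0 : ℝ)..ξ, q (α + η) * H α η

theorem goursatDeriv_zero_left (q : ℝ → ℂ) (H : ℝ → ℝ → ℂ) (η : ℝ) : goursatDeriv q H 0 η = 0 :=
  intervalIntegral.integral_same

namespace IsGoursatKernel

variable {q : ℝ → ℂ} {H : ℝ → ℝ → ℂ}

theorem continuous_mul (h : IsGoursatKernel q H) (hq : Continuous q) :
    Continuous (Function.uncurry fun ξ η => q (ξ + η) * H ξ η) :=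
  (hq.comp continuous_add).mul h.continuous

theorem continuous_goursatDeriv (h : IsGoursatKernel q H) (hq : Continuous q) :
    Continuous (Function.uncurry (goursatDeriv q H)) :=
  intervalIntegral.continuous_parametric_intervalIntegral_of_continuous
    (f := fun (p : ℝ × ℝ) α => q (α + p.2) * H α p.2)
    ((h.continuous_mul hq).comp (by fun_prop : Continuous fun r : (ℝ × ℝ) × ℝ => (r.2, r.1.2)))
    continuous_fst

theorem hasDerivAt_goursatDeriv (h : IsGoursatKernel q H) (hq : Continuous q) (ξ η : ℝ) :
    HasDerivAt (fun s => goursatDeriv q H s η) (q (ξ + η) * H ξ η) ξ :=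
  (((h.continuous_mul hq).uncurry_right η).integral_hasStrictDerivAt 0 ξ).hasDerivAt

theorem continuous_integral_snd (h : IsGoursatKernel q H) (hq : Continuous q) :
    Continuous (Function.uncurry fun ξ η => ∫ β in (0 : ℝ)..η, q (ξ + β) * H ξ β) :=
  intervalIntegral.continuous_parametric_intervalIntegral_of_continuous
    (f := fun (p : ℝ × ℝ) β => q (p.1 + β) * H p.1 β)
    ((h.continuous_mul hq).comp (by fun_prop : Continuous fun r : (ℝ × ℝ) × ℝ => (r.1.1, r.2)))
    continuous_snd

theorem hasDerivAt_snd (h : IsGoursatKernel q H) (hq : Continuous q) (ξ η : ℝ) :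
    HasDerivAt (fun s => H ξ s) (goursatDeriv q H ξ η) η := by
  simp only [h.eq_integral ξ]
  exact (hasDerivAt_integral_param (G := fun s α => ∫ β in (0 : ℝ)..s, q (α + β) * H α β)
    (G₁ := fun s α => q (α + s) * H α s)
    ((h.continuous_integral_snd hq).comp continuous_swap)
    ((h.continuous_mul hq).comp continuous_swap)
    (fun s α => (((h.continuous_mul hq).uncurry_left α).integral_hasStrictDerivAt 0 s).hasDerivAt)
    0 ξ η).const_add _

theorem hasDerivAt_fst (h : IsGoursatKernel q H) (hq : Continuous q) (ξ η : ℝ) :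
    HasDerivAt (fun s => H s η) (q ξ / 2 + ∫ β in (0 : ℝ)..η, q (ξ + β) * H ξ β) ξ := by
  simp only [fun s => h.eq_integral s η]
  exact ((hq.integral_hasStrictDerivAt 0 ξ).hasDerivAt.div_const 2).add
    (((h.continuous_integral_snd hq).uncurry_right η).integral_hasStrictDerivAt 0 ξ).hasDerivAt

theorem hasDerivAt_zero_right (h : IsGoursatKernel q H) (hq : Continuous q) (ξ : ℝ) :
    HasDerivAt (fun s => H s 0) (q ξ / 2) ξ :=
  (h.hasDerivAt_fst hq ξ 0).congr_deriv (by rw [intervalIntegral.integral_same, add_zero])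

theorem apply_zero_left (h : IsGoursatKernel q H) (η : ℝ) : H 0 η = 0 := by
  rw [h.eq_integral, intervalIntegral.integral_same, intervalIntegral.integral_same, zero_div,
    add_zero]

theorem contDiff (h : IsGoursatKernel q H) (hq : Continuous q) :
    ContDiff ℝ 1 (Function.uncurry H) :=
  contDiff_one_uncurry_of_hasDerivAt (h.hasDerivAt_fst hq) (h.hasDerivAt_snd hq)
    (((hq.comp continuous_fst).div_const 2).add (h.continuous_integral_snd hq))
    (h.continuous_goursatDeriv hq)

end IsGoursatKernel

/-- The Volterra integral `∫ₜ K x t w t` over `[-x, x]` with kernel `K x t = H ξ η` written in the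
characteristic coordinates `ξ = (x + t) / 2`, `η = (x - t) / 2`. -/
def kernelTransform (H : ℝ → ℝ → ℂ) (w : ℝ → ℂ) (x : ℝ) : ℂ :=
  ∫ t in (-x)..x, H ((x + t) / 2) ((x - t) / 2) * w t

theorem kernelTransform_eq_integral_fst (H : ℝ → ℝ → ℂ) (w : ℝ → ℂ) (x : ℝ) :
    kernelTransform H w x = 2 * ∫ ξ in (0 : ℝ)..x, H ξ (x - ξ) * w (2 * ξ - x) := by
  have subst := intervalIntegral.smul_integral_comp_mul_sub (a := 0) (b := x)
    (f := fun t => H ((x + t) / 2) ((x - t) / 2) * w t) 2 x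
  rw [show (2 : ℝ) * 0 - x = -x by ring, show 2 * x - x = x by ring, real_smul] at subst
  rw [kernelTransform, ← subst, ofReal_ofNat]
  congr! 5 <;> ring_nf

theorem kernelTransform_eq_integral_snd (H : ℝ → ℝ → ℂ) (w : ℝ → ℂ) (x : ℝ) :
    kernelTransform H w x = 2 * ∫ η in (0 : ℝ)..x, H (x - η) η * w (x - 2 * η) := by
  have subst := intervalIntegral.smul_integral_comp_sub_mul (a := 0) (b := x)
    (f := fun t => H ((x + t) / 2) ((x - t) / 2) * w t) 2 x
  rw [show x - 2 * x = -x by ring, show x - 2 * 0 = x by ring, real_smul] at subst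
  rw [kernelTransform, ← subst, ofReal_ofNat]
  congr! 5 <;> ring_nf

theorem kernelTransform_zero_right (H : ℝ → ℝ → ℂ) (w : ℝ → ℂ) : kernelTransform H w 0 = 0 := by
  rw [kernelTransform, neg_zero, intervalIntegral.integral_same]

theorem kernelTransform_fun_zero (H : ℝ → ℝ → ℂ) (x : ℝ) :
    kernelTransform H (fun _ => 0) x = 0 := by
  simp only [kernelTransform, mul_zero, intervalIntegral.integral_zero]

theorem kernelTransform_const_mul (H : ℝ → ℝ → ℂ) (c : ℂ) (w : ℝ → ℂ) (x : ℝ) :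
    kernelTransform H (fun t => c * w t) x = c * kernelTransform H w x := by
  simp only [kernelTransform, mul_left_comm _ c, intervalIntegral.integral_const_mul]

theorem continuous_kernelTransform {H : ℝ → ℝ → ℂ} (hH : Continuous (Function.uncurry H))
    {w : ℝ → ℂ} (hw : Continuous w) : Continuous (kernelTransform H w) := by
  rw [funext (kernelTransform_eq_integral_fst H w)]
  exact continuous_const.mul
    (intervalIntegral.continuous_parametric_intervalIntegral_of_continuous
      (f := fun x ξ => H ξ (x - ξ) * w (2 * ξ - x))
      ((hH.comp (by fun_prop : Continuous fun p : ℝ × ℝ => (p.2, p.1 - p.2))).mul (by fun_prop))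
      continuous_id)

theorem kernelTransform_mul_left (q : ℝ → ℂ) (H : ℝ → ℝ → ℂ) (w : ℝ → ℂ) (x : ℝ) :
    kernelTransform (fun ξ η => q (ξ + η) * H ξ η) w x = q x * kernelTransform H w x := by
  have cancel (t : ℝ) : (x + t) / 2 + (x - t) / 2 = x := by ring
  simp only [kernelTransform, cancel, mul_assoc, intervalIntegral.integral_const_mul]

theorem hasDerivAt_kernelTransform_of_snd {H L : ℝ → ℝ → ℂ} (hH : Continuous (Function.uncurry H))
    (hL : Continuous (Function.uncurry L)) (hHL : ∀ ξ η, HasDerivAt (fun s => H ξ s) (L ξ η) η)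
    {u u' : ℝ → ℂ} (hu : ∀ x, HasDerivAt u (u' x) x) (hu' : Continuous u') (x : ℝ) :
    HasDerivAt (kernelTransform H u)
      (2 * H x 0 * u x + kernelTransform L u x - kernelTransform H u' x) x := by
  have hu_cont : Continuous u := continuous_iff_continuousAt.2 fun x => (hu x).continuousAt
  have hHu : Continuous fun p : ℝ × ℝ => H p.2 (p.1 - p.2) * u (2 * p.2 - p.1) := by fun_prop
  have hLu : Continuous fun p : ℝ × ℝ => L p.2 (p.1 - p.2) * u (2 * p.2 - p.1) := by fun_prop
  have hHu' : Continuous fun p : ℝ × ℝ => H p.2 (p.1 - p.2) * u' (2 * p.2 - p.1) := by fun_prop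
  have integrand (s ξ : ℝ) : HasDerivAt (fun s => H ξ (s - ξ) * u (2 * ξ - s))
      (L ξ (s - ξ) * u (2 * ξ - s) - H ξ (s - ξ) * u' (2 * ξ - s)) s :=
    (((hHL ξ (s - ξ)).comp_sub_const s ξ).mul ((hu (2 * ξ - s)).comp_const_sub _ s)).congr_deriv
      (by ring)
  simp only [funext (kernelTransform_eq_integral_fst H u), kernelTransform_eq_integral_fst]
  refine ((hasDerivAt_integral_self (by exact hHu) (hLu.sub hHu') integrand 0 x).const_mul
    2).congr_deriv ?_
  rw [intervalIntegral.integral_sub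
    (f := fun ξ => L ξ (x - ξ) * u (2 * ξ - x)) (g := fun ξ => H ξ (x - ξ) * u' (2 * ξ - x))
    ((hLu.comp (.prodMk_right x)).intervalIntegrable _ _)
    ((hHu'.comp (.prodMk_right x)).intervalIntegrable _ _), sub_self, show 2 * x - x = x by ring]
  ring

theorem hasDerivAt_kernelTransform_of_fst {L Q : ℝ → ℝ → ℂ} (hL : Continuous (Function.uncurry L))
    (hQ : Continuous (Function.uncurry Q)) (hLQ : ∀ ξ η, HasDerivAt (fun s => L s η) (Q ξ η) ξ)
    {u u' : ℝ → ℂ} (hu : ∀ x, HasDerivAt u (u' x) x) (hu' : Continuous u') (x : ℝ) :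
    HasDerivAt (kernelTransform L u)
      (2 * L 0 x * u (-x) + kernelTransform Q u x + kernelTransform L u' x) x := by
  have hu_cont : Continuous u := continuous_iff_continuousAt.2 fun x => (hu x).continuousAt
  have hLu : Continuous fun p : ℝ × ℝ => L (p.1 - p.2) p.2 * u (p.1 - 2 * p.2) := by fun_prop
  have hQu : Continuous fun p : ℝ × ℝ => Q (p.1 - p.2) p.2 * u (p.1 - 2 * p.2) := by fun_prop
  have hLu' : Continuous fun p : ℝ × ℝ => L (p.1 - p.2) p.2 * u' (p.1 - 2 * p.2) := by fun_prop
  have integrand (s η : ℝ) : HasDerivAt (fun s => L (s - η) η * u (s - 2 * η))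
      (Q (s - η) η * u (s - 2 * η) + L (s - η) η * u' (s - 2 * η)) s :=
    ((hLQ (s - η) η).comp_sub_const s η).mul ((hu (s - 2 * η)).comp_sub_const s _)
  simp only [funext (kernelTransform_eq_integral_snd L u), kernelTransform_eq_integral_snd]
  refine ((hasDerivAt_integral_self (by exact hLu) (hQu.add hLu') integrand 0 x).const_mul
    2).congr_deriv ?_
  rw [intervalIntegral.integral_add
    (f := fun η => Q (x - η) η * u (x - 2 * η)) (g := fun η => L (x - η) η * u' (x - 2 * η))
    ((hQu.comp (.prodMk_right x)).intervalIntegrable _ _)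
    ((hLu'.comp (.prodMk_right x)).intervalIntegrable _ _), sub_self, show x - 2 * x = -x by ring]
  ring

theorem kernelTransform_sum {H : ℝ → ℝ → ℂ} (hH : Continuous (Function.uncurry H)) {ι : Type*}
    (s : Finset ι) {w : ι → ℝ → ℂ} (hw : ∀ i ∈ s, Continuous (w i)) (x : ℝ) :
    kernelTransform H (fun t => ∑ i ∈ s, w i t) x = ∑ i ∈ s, kernelTransform H (w i) x := by
  have hHx : Continuous fun t : ℝ => H ((x + t) / 2) ((x - t) / 2) :=
    hH.comp (by fun_prop : Continuous fun t : ℝ => ((x + t) / 2, (x - t) / 2))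
  simp only [kernelTransform, Finset.mul_sum]
  exact intervalIntegral.integral_finsetSum fun i hi =>
    (hHx.mul (hw i hi)).intervalIntegrable _ _

namespace IsGoursatKernel

variable {q : ℝ → ℂ} {H : ℝ → ℝ → ℂ} {u u' u'' : ℝ → ℂ}

theorem hasDerivAt_kernelTransform (h : IsGoursatKernel q H) (hq : Continuous q)
    (hu : ∀ x, HasDerivAt u (u' x) x) (hu' : Continuous u') (x : ℝ) :
    HasDerivAt (kernelTransform H u)
      (2 * H x 0 * u x + kernelTransform (goursatDeriv q H) u x - kernelTransform H u' x) x :=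
  hasDerivAt_kernelTransform_of_snd h.continuous (h.continuous_goursatDeriv hq)
    (h.hasDerivAt_snd hq) hu hu' x

theorem hasDerivAt_deriv_kernelTransform (h : IsGoursatKernel q H) (hq : Continuous q)
    (hu : ∀ x, HasDerivAt u (u' x) x) (hu' : ∀ x, HasDerivAt u' (u'' x) x)
    (hu'' : Continuous u'') (x : ℝ) :
    HasDerivAt
      (fun x => 2 * H x 0 * u x + kernelTransform (goursatDeriv q H) u x - kernelTransform H u' x)
      (q x * (u x + kernelTransform H u x) + kernelTransform H u'' x) x := by
  have hu'_cont : Continuous u' := continuous_iff_continuousAt.2 fun x => (hu' x).continuousAt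
  have boundary : HasDerivAt (fun x => 2 * H x 0 * u x) (q x * u x + 2 * H x 0 * u' x) x :=
    (((h.hasDerivAt_zero_right hq x).const_mul 2).mul (hu x)).congr_deriv (by ring)
  have interior := hasDerivAt_kernelTransform_of_fst (h.continuous_goursatDeriv hq)
    (h.continuous_mul hq) (h.hasDerivAt_goursatDeriv hq) hu hu'_cont x
  rw [goursatDeriv_zero_left, kernelTransform_mul_left] at interior
  exact ((boundary.add interior).sub (h.hasDerivAt_kernelTransform hq hu' hu'' x)).congr_deriv
    (by ring)

end IsGoursatKernel

section ReductionOfOrder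

variable {s : Set ℝ} {q f f' y y' h : ℝ → ℂ}

theorem hasDerivAt_wronskian {x : ℝ} (hf : HasDerivAt f (f' x) x)
    (hf' : HasDerivAt f' (q x * f x) x) (hy : HasDerivAt y (y' x) x)
    (hy' : HasDerivAt y' (q x * y x + h x) x) :
    HasDerivAt (fun x => y' x * f x - y x * f' x) (f x * h x) x :=
  ((hy'.mul hf).sub (hy.mul hf')).congr_deriv (by ring)

theorem wronskian_eq_add_integral (hs : s.OrdConnected)
    (hf : ∀ x ∈ s, HasDerivAt f (f' x) x) (hf' : ∀ x ∈ s, HasDerivAt f' (q x * f x) x)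
    (hy : ∀ x ∈ s, HasDerivAt y (y' x) x) (hy' : ∀ x ∈ s, HasDerivAt y' (q x * y x + h x) x)
    (hh : ContinuousOn h s) {a x : ℝ} (ha : a ∈ s) (hx : x ∈ s) :
    y' x * f x - y x * f' x = y' a * f a - y a * f' a + ∫ r in a..x, f r * h r := by
  have hax : Set.uIcc a x ⊆ s := hs.uIcc_subset ha hx
  have hfc : ContinuousOn f s := fun x hx => (hf x hx).continuousAt.continuousWithinAt
  rw [intervalIntegral.integral_eq_sub_of_hasDerivAt
    (fun r hr => hasDerivAt_wronskian (hf r (hax hr)) (hf' r (hax hr)) (hy r (hax hr))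
      (hy' r (hax hr))) ((hfc.mul hh).mono hax).intervalIntegrable]
  ring

/-- Dividing the Wronskian `y' f - y f'` by `f²` gives the derivative of `y / f`. -/
theorem eq_mul_add_integral_of_hasDerivAt (hs : s.OrdConnected)
    (hf : ∀ x ∈ s, HasDerivAt f (f' x) x) (hf' : ∀ x ∈ s, HasDerivAt f' (q x * f x) x)
    (hfne : ∀ x ∈ s, f x ≠ 0)
    (hy : ∀ x ∈ s, HasDerivAt y (y' x) x) (hy' : ∀ x ∈ s, HasDerivAt y' (q x * y x + h x) x)
    (hh : ContinuousOn h s) {a x : ℝ} (ha : a ∈ s) (hx : x ∈ s) :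
    y x = f x * (y a / f a + ∫ r in a..x, (f r ^ 2)⁻¹ *
      (y' a * f a - y a * f' a + ∫ t in a..r, f t * h t)) := by
  have hax : Set.uIcc a x ⊆ s := hs.uIcc_subset ha hx
  have hfc : ContinuousOn f s := fun x hx => (hf x hx).continuousAt.continuousWithinAt
  have wronskian_cont : ContinuousOn (fun x => y' x * f x - y x * f' x) s := fun x hx =>
    (hasDerivAt_wronskian (hf x hx) (hf' x hx) (hy x hx)
      (hy' x hx)).continuousAt.continuousWithinAt
  have deriv_quotient (r) (hr : r ∈ Set.uIcc a x) :
      HasDerivAt (fun x => y x / f x) ((f r ^ 2)⁻¹ * (y' r * f r - y r * f' r)) r :=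
    ((hy r (hax hr)).div (hf r (hax hr)) (hfne r (hax hr))).congr_deriv (div_eq_inv_mul _ _)
  have quotient : (∫ r in a..x, (f r ^ 2)⁻¹ * (y' r * f r - y r * f' r)) = y x / f x - y a / f a :=
    intervalIntegral.integral_eq_sub_of_hasDerivAt deriv_quotient
      ((((hfc.pow 2).inv₀ fun r hr => pow_ne_zero 2 (hfne r hr)).mul
        wronskian_cont).mono hax).intervalIntegrable
  rw [intervalIntegral.integral_congr fun r hr => by
    rw [wronskian_eq_add_integral hs hf hf' hy hy' hh ha (hax hr)]] at quotient
  rw [quotient, add_sub_cancel, mul_div_cancel₀ _ (hfne x hx)]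

end ReductionOfOrder

theorem formalPower_zero (f : ℝ → ℂ) (x : ℝ) : formalPower f 0 x = f x := by
  simp [formalPower, formalXt]

theorem formalPower_one (f : ℝ → ℂ) (x : ℝ) :
    formalPower f 1 x = f x * ∫ s in (0 : ℝ)..x, (f s ^ 2)⁻¹ := by
  simp [formalPower, formalX]

theorem formalPower_add_two (f : ℝ → ℂ) (k : ℕ) (x : ℝ) :
    formalPower f (k + 2) x = f x * ∫ s in (0 : ℝ)..x, (f s ^ 2)⁻¹ *
      ∫ r in (0 : ℝ)..s, f r * ((k + 2) * (k + 1) * formalPower f k r) := by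
  have nested (g : ℝ → ℂ) : (∫ s in (0 : ℝ)..x, (f s ^ 2)⁻¹ *
      ∫ r in (0 : ℝ)..s, f r * ((k + 2) * (k + 1) * (f r * g r))) =
      (k + 2) * ∫ s in (0 : ℝ)..x, ((k + 1) * ∫ r in (0 : ℝ)..s, g r * f r ^ 2) * (f s ^ 2)⁻¹ := by
    simp only [← intervalIntegral.integral_const_mul, ← intervalIntegral.integral_mul_const]
    congr! 4
    ring
  rcases Nat.even_or_odd k with hk | hk
  · have hk2 : ¬ Odd (k + 2) := by simpa [parity_simps] using hk
    simp only [formalPower, if_neg hk2, if_neg (Nat.not_odd_iff_even.2 hk), nested, formalXt,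
      hk.neg_one_pow, hk.add_one.neg_one_pow, zpow_one, zpow_neg_one]
    push_cast
    ring_nf
  · have hk2 : Odd (k + 2) := by simpa [parity_simps] using hk
    simp only [formalPower, if_pos hk2, if_pos hk, nested, formalX,
      hk.add_one.neg_one_pow, hk2.neg_one_pow, zpow_one, zpow_neg_one]
    push_cast
    ring_nf

theorem hasDerivAt_ofReal_pow_succ (k : ℕ) (t : ℝ) :
    HasDerivAt (fun t : ℝ => (t : ℂ) ^ (k + 1)) ((k + 1) * (t : ℂ) ^ k) t := by
  simpa using (hasDerivAt_pow (k + 1) (t : ℂ)).comp_ofReal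

namespace IsGoursatKernel

variable {s : Set ℝ} {q f f' : ℝ → ℂ} {H : ℝ → ℝ → ℂ}

theorem add_kernelTransform_eq_mul_integral (h : IsGoursatKernel q H) (hq : Continuous q)
    (hs : s.OrdConnected) (h0 : (0 : ℝ) ∈ s)
    (hf : ∀ x ∈ s, HasDerivAt f (f' x) x) (hf' : ∀ x ∈ s, HasDerivAt f' (q x * f x) x)
    (hf0 : f 0 = 1) (hf'0 : f' 0 = 0) (hfne : ∀ x ∈ s, f x ≠ 0) {u u' u'' : ℝ → ℂ}
    (hu : ∀ x, HasDerivAt u (u' x) x) (hu' : ∀ x, HasDerivAt u' (u'' x) x)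
    (hu'' : Continuous u'') {x : ℝ} (hx : x ∈ s) :
    u x + kernelTransform H u x = f x * (u 0 + ∫ r in (0 : ℝ)..x, (f r ^ 2)⁻¹ *
      (u' 0 + ∫ t in (0 : ℝ)..r, f t * (u'' t + kernelTransform H u'' t))) := by
  have hu'_cont : Continuous u' := continuous_iff_continuousAt.2 fun x => (hu' x).continuousAt
  have reduction := eq_mul_add_integral_of_hasDerivAt hs hf hf' hfne
    (fun x _ => (hu x).add (h.hasDerivAt_kernelTransform hq hu hu'_cont x))
    (h := fun x => u'' x + kernelTransform H u'' x)
    (fun x _ => ((hu' x).add (h.hasDerivAt_deriv_kernelTransform hq hu hu' hu'' x)).congr_deriv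
      (by simp only [Pi.add_apply]; ring))
    (hu''.add (continuous_kernelTransform h.continuous hu'')).continuousOn h0 hx
  simpa only [Pi.add_apply, kernelTransform_zero_right, h.apply_zero_left, hf0, hf'0, mul_zero,
    zero_mul, mul_one, div_one, add_zero, sub_zero] using reduction

theorem formalPower_eq_pow_add_kernelTransform (h : IsGoursatKernel q H) (hq : Continuous q)
    (hs : s.OrdConnected) (h0 : (0 : ℝ) ∈ s)
    (hf : ∀ x ∈ s, HasDerivAt f (f' x) x) (hf' : ∀ x ∈ s, HasDerivAt f' (q x * f x) x)
    (hf0 : f 0 = 1) (hf'0 : f' 0 = 0) (hfne : ∀ x ∈ s, f x ≠ 0) (k : ℕ) :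
    ∀ x ∈ s, formalPower f k x = x ^ k + kernelTransform H (fun t => (t : ℂ) ^ k) x := by
  have reduction {u u' u'' : ℝ → ℂ} := h.add_kernelTransform_eq_mul_integral
    (u := u) (u' := u') (u'' := u'') hq hs h0 hf hf' hf0 hf'0 hfne
  induction k using Nat.twoStepInduction with
  | zero =>
    intro x hx
    rw [formalPower_zero]
    simpa [kernelTransform_fun_zero] using
      (reduction (u := fun _ => 1) (u' := 0) (u'' := fun _ => 0) (fun x => hasDerivAt_const x 1)
        (fun x => hasDerivAt_const x 0) continuous_const hx).symm
  | one =>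
    intro x hx
    rw [formalPower_one]
    simpa [kernelTransform_fun_zero] using
      (reduction (u := fun t => (t : ℂ)) (u' := 1) (u'' := fun _ => 0)
        (fun x => (hasDerivAt_id (x : ℂ)).comp_ofReal) (fun x => hasDerivAt_const x 1)
        continuous_const hx).symm
  | more k ih _ =>
    intro x hx
    have second_deriv (t : ℝ) : HasDerivAt (fun t : ℝ => (k + 2) * (t : ℂ) ^ (k + 1))
        ((k + 2) * (k + 1) * (t : ℂ) ^ k) t :=
      ((hasDerivAt_ofReal_pow_succ k t).const_mul _).congr_deriv (mul_assoc _ _ _).symm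
    have ih_integral (r : ℝ) (hr : r ∈ s) :
        ∫ t in (0 : ℝ)..r, f t * ((k + 2) * (k + 1) * formalPower f k t) =
        ∫ t in (0 : ℝ)..r, f t * ((k + 2) * (k + 1) * (t : ℂ) ^ k +
          kernelTransform H (fun t => (k + 2) * (k + 1) * (t : ℂ) ^ k) t) :=
      intervalIntegral.integral_congr fun t ht => by
        rw [ih t (hs.uIcc_subset h0 hr ht), kernelTransform_const_mul, mul_add]
    rw [formalPower_add_two, reduction
      (fun t => (hasDerivAt_ofReal_pow_succ (k + 1) t).congr_deriv (by push_cast; ring))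
      second_deriv (by fun_prop) hx, ofReal_zero, zero_pow (by omega), zero_pow (by omega),
      mul_zero, zero_add]
    simp only [zero_add]
    congr 1
    exact intervalIntegral.integral_congr fun r hr => by
      rw [ih_integral r (hs.uIcc_subset h0 hx hr)]

end IsGoursatKernel

section Extension

variable {E : Type*} {a b : ℝ}

theorem exists_continuous_eqOn_Icc [TopologicalSpace E] (hab : a ≤ b) {g : ℝ → E}
    (hg : ContinuousOn g (Set.Icc a b)) :
    ∃ p : ℝ → E, Continuous p ∧ Set.EqOn p g (Set.Icc a b) :=
  ⟨Set.IccExtend hab fun x => g x, (continuousOn_iff_continuous_domRestrict.1 hg).Icc_extend',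
    fun _ hx => Set.IccExtend_of_mem hab _ hx⟩

variable [NormedAddCommGroup E] [NormedSpace ℝ E] [CompleteSpace E]

theorem exists_hasDerivAt_eqOn_Icc {u u' p : ℝ → E} (hab : a ≤ b)
    (hu : ∀ x ∈ Set.Icc a b, HasDerivAt u (u' x) x) (hp : Continuous p)
    (hpu : Set.EqOn p u' (Set.Icc a b)) :
    ∃ v : ℝ → E, (∀ x, HasDerivAt v (p x) x) ∧ Set.EqOn v u (Set.Icc a b) := by
  refine ⟨fun x => u a + ∫ s in a..x, p s,
    fun x => (hp.integral_hasStrictDerivAt a x).hasDerivAt.const_add _, fun x hx => ?_⟩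
  have hax : Set.uIcc a x ⊆ Set.Icc a b := Set.uIcc_subset_Icc (Set.left_mem_Icc.2 hab) hx
  beta_reduce
  rw [intervalIntegral.integral_eq_sub_of_hasDerivAt
    (fun y hy => hpu (hax hy) ▸ hu y (hax hy)) (hp.intervalIntegrable _ _), add_sub_cancel]

theorem exists_hasDerivAt_hasDerivAt_eqOn_Icc {u u' u'' : ℝ → E} (hab : a ≤ b)
    (hu : ∀ x ∈ Set.Icc a b, HasDerivAt u (u' x) x)
    (hu' : ∀ x ∈ Set.Icc a b, HasDerivAt u' (u'' x) x) (hu'' : ContinuousOn u'' (Set.Icc a b)) :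
    ∃ v v' v'' : ℝ → E, (∀ x, HasDerivAt v (v' x) x) ∧ (∀ x, HasDerivAt v' (v'' x) x) ∧
      Continuous v'' ∧ Set.EqOn v u (Set.Icc a b) ∧ Set.EqOn v' u' (Set.Icc a b) ∧
      Set.EqOn v'' u'' (Set.Icc a b) := by
  obtain ⟨v'', hv'', hvu''⟩ := exists_continuous_eqOn_Icc hab hu''
  obtain ⟨v', hv', hvu'⟩ := exists_hasDerivAt_eqOn_Icc hab hu' hv'' hvu''
  obtain ⟨v, hv, hvu⟩ := exists_hasDerivAt_eqOn_Icc hab hu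
    (continuous_iff_continuousAt.2 fun x => (hv' x).continuousAt) hvu'
  exact ⟨v, v', v'', hv, hv', hv'', hvu, hvu', hvu''⟩

end Extension

section Reflection

variable {E : Type*} [NormedAddCommGroup E] [NormedSpace ℝ E]

theorem hasDerivAt_of_eventually_eq_or_eq {F₁ F₂ G : ℝ → E} {D : E} {x : ℝ}
    (h₁ : HasDerivAt F₁ D x) (h₂ : HasDerivAt F₂ D x) (h₁₂ : F₁ x = F₂ x)
    (hG : ∀ᶠ s in 𝓝 x, G s = F₁ s ∨ G s = F₂ s) : HasDerivAt G D x := by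
  rw [hasDerivAt_iff_isLittleO] at h₁ h₂ ⊢
  have hGx : G x = F₂ x := hG.self_of_nhds.elim (·.trans h₁₂) id
  refine Asymptotics.IsBigO.trans_isLittleO (.of_bound' ?_) (h₁.norm_left.add h₂.norm_left)
  filter_upwards [hG] with s hs
  rw [Real.norm_of_nonneg (by positivity), hGx]
  rcases hs with hs | hs <;> rw [hs, h₁₂]
  · exact le_add_of_nonneg_right (norm_nonneg _)
  · exact le_add_of_nonneg_left (norm_nonneg _)

/-- The nearest point of `[-b, b]` to `s`. -/
def clamp (b s : ℝ) : ℝ := max (-b) (min b s)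

theorem clamp_of_mem_Icc {b s : ℝ} (hs : s ∈ Set.Icc (-b) b) : clamp b s = s := by
  rw [clamp, min_eq_right hs.2, max_eq_right hs.1]

theorem eventually_clamp_eq_or_eq {b x : ℝ} (hx : x ∈ Set.Icc (-b) b) :
    ∀ᶠ s in 𝓝 x, clamp b s = s ∨ clamp b s = x := by
  have right : ∀ᶠ s in 𝓝 x, s ≤ b ∨ x = b := hx.2.lt_or_eq.elim
    (fun h => (eventually_le_nhds h).mono fun _ => .inl) (fun h => .of_forall fun _ => .inr h)
  have left : ∀ᶠ s in 𝓝 x, -b ≤ s ∨ x = -b := hx.1.lt_or_eq.elim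
    (fun h => (eventually_ge_nhds h).mono fun _ => .inl) (fun h => .of_forall fun _ => .inr h.symm)
  filter_upwards [left, right] with s hl hr
  have hb : -b ≤ b := hx.1.trans hx.2
  rcases le_total s (-b) with hs | hs
  · rw [clamp, min_eq_right (hs.trans hb), max_eq_left hs]
    grind
  rcases le_total s b with hs' | hs'
  · exact .inl (clamp_of_mem_Icc ⟨hs, hs'⟩)
  · rw [clamp, min_eq_left hs', max_eq_right hb]
    grind

theorem hasDerivAt_reflection {b x : ℝ} {F : ℝ → E} {D : E} (hx : x ∈ Set.Icc (-b) b)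
    (hF : HasDerivAt F D x) :
    HasDerivAt (fun s => (2 : ℝ) • F (clamp b s) - F (2 * clamp b s - s)) D x := by
  have reflected : HasDerivAt (fun s => (2 : ℝ) • F x - F (2 * x - s)) D x := by
    have := (HasDerivAt.comp_const_sub (f := F) (2 * x) x
      (by rwa [two_mul, add_sub_cancel_right])).const_sub ((2 : ℝ) • F x)
    rwa [neg_neg] at this
  refine hasDerivAt_of_eventually_eq_or_eq hF reflected ?_ ?_
  · rw [two_mul, add_sub_cancel_right, two_smul, add_sub_cancel_right]
  · filter_upwards [eventually_clamp_eq_or_eq hx] with s hs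
    refine hs.imp (fun h => ?_) fun h => by rw [h]
    rw [h, two_mul, add_sub_cancel_right, two_smul, add_sub_cancel_right]

theorem abs_clamp_le {b : ℝ} (hb : 0 ≤ b) (s : ℝ) : |clamp b s| ≤ b := by
  grind [clamp]

theorem clamp_mem_uIcc {b : ℝ} (hb : 0 ≤ b) (s : ℝ) : clamp b s ∈ Set.uIcc 0 s := by
  grind [clamp, Set.mem_uIcc]

theorem abs_two_mul_clamp_sub_le {b s : ℝ} (hs : |s| ≤ 2 * b) : |2 * clamp b s - s| ≤ b := by
  grind [clamp]

theorem two_mul_clamp_sub_mem_uIcc {b s : ℝ} (hs : |s| ≤ 2 * b) :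
    2 * clamp b s - s ∈ Set.uIcc 0 s := by
  grind [clamp, Set.mem_uIcc]

end Reflection

theorem integral_indicator_Icc_abs {E : Type*} [NormedAddCommGroup E] [NormedSpace ℝ E] (g : ℝ → E)
    {c s : ℝ} (hc : c ∈ Set.uIcc 0 s) :
    ∫ t in (-s)..s, (Set.Icc (-|c|) |c|).indicator g t = ∫ t in (-c)..c, g t := by
  have of_nonneg {c s : ℝ} (hc : 0 ≤ c) (hcs : c ≤ s) :
      ∫ t in (-s)..s, (Set.Icc (-c) c).indicator g t = ∫ t in (-c)..c, g t := by
    rw [intervalIntegral.integral_of_le (by linarith), ← integral_Icc_eq_integral_Ioc,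
      setIntegral_indicator measurableSet_Icc,
      Set.inter_eq_right.2 (Set.Icc_subset_Icc (neg_le_neg hcs) hcs),
      integral_Icc_eq_integral_Ioc, intervalIntegral.integral_of_le (by linarith)]
  rcases Set.mem_uIcc.1 hc with ⟨h₀, h⟩ | ⟨h, h₀⟩
  · rw [abs_of_nonneg h₀, of_nonneg h₀ h]
  · have := of_nonneg (neg_nonneg.2 h₀) (neg_le_neg h)
    rw [neg_neg, neg_neg] at this
    rw [abs_of_nonpos h₀, neg_neg, intervalIntegral.integral_symm, this,
      ← intervalIntegral.integral_symm]

/-- The kernel `K s t = H ξ η` of `kernelTransform`, cut off outside the double triangle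
`|t| ≤ |s|`. -/
def triangleKernel (H : ℝ → ℝ → ℂ) (s t : ℝ) : ℂ :=
  (Set.Icc (-|s|) |s|).indicator (fun t => H ((s + t) / 2) ((s - t) / 2)) t

theorem triangleKernel_mul (H : ℝ → ℝ → ℂ) (w : ℝ → ℂ) (c t : ℝ) :
    triangleKernel H c t * w t =
      (Set.Icc (-|c|) |c|).indicator (fun t => H ((c + t) / 2) ((c - t) / 2) * w t) t :=
  (Set.indicator_mul_left _ _ _).symm

theorem integral_triangleKernel_mul (H : ℝ → ℝ → ℂ) (w : ℝ → ℂ) {c s : ℝ}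
    (hc : c ∈ Set.uIcc 0 s) :
    ∫ t in (-s)..s, triangleKernel H c t * w t = kernelTransform H w c := by
  simp only [triangleKernel_mul]
  exact integral_indicator_Icc_abs _ hc

theorem intervalIntegrable_triangleKernel_mul {H : ℝ → ℝ → ℂ}
    (hH : Continuous (Function.uncurry H)) {w : ℝ → ℂ} {b c : ℝ}
    (hw : ContinuousOn w (Set.Icc (-b) b)) (hc : |c| ≤ b) (s : ℝ) :
    IntervalIntegrable (fun t => triangleKernel H c t * w t) volume (-s) s := by
  have hHc : Continuous fun t => H ((c + t) / 2) ((c - t) / 2) :=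
    hH.comp (by fun_prop : Continuous fun t : ℝ => ((c + t) / 2, (c - t) / 2))
  simp only [triangleKernel_mul]
  exact ((hHc.continuousOn.mul (hw.mono (Set.Icc_subset_Icc (neg_le_neg hc)
    hc))).integrableOn_Icc.integrable_indicator measurableSet_Icc).intervalIntegrable

/-- An extension of the transmutation kernel from `|s| ≤ b` to all `s`, chosen such that the
Volterra operator with this kernel continues `kernelTransform` by point reflection at `s = ± b`,
whence the transformed functions are two-sided differentiable at the endpoints. -/
def reflectedKernel (b : ℝ) (H : ℝ → ℝ → ℂ) (s t : ℝ) : ℂ :=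
  2 * triangleKernel H (clamp b s) t - triangleKernel H (2 * clamp b s - s) t

section ReflectedKernel

variable {b : ℝ} {H : ℝ → ℝ → ℂ}

theorem reflectedKernel_eq {s t : ℝ} (hs : |s| ≤ b) (ht : |t| ≤ |s|) :
    reflectedKernel b H s t = H ((s + t) / 2) ((s - t) / 2) := by
  rw [reflectedKernel, clamp_of_mem_Icc (abs_le.1 hs), two_mul s, add_sub_cancel_right, two_mul,
    add_sub_cancel_right, triangleKernel,
    Set.indicator_of_mem (Set.mem_Icc.2 (abs_le.1 ht))]

theorem continuousOn_reflectedKernel (hH : Continuous (Function.uncurry H)) :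
    ContinuousOn (fun p : ℝ × ℝ => reflectedKernel b H p.1 p.2)
      {p : ℝ × ℝ | |p.2| ≤ |p.1| ∧ |p.1| ≤ b} :=
  (hH.comp (by fun_prop : Continuous fun p : ℝ × ℝ =>
    ((p.1 + p.2) / 2, (p.1 - p.2) / 2))).continuousOn.congr fun _ hp => reflectedKernel_eq hp.2 hp.1

theorem integral_reflectedKernel_mul (hH : Continuous (Function.uncurry H)) {w : ℝ → ℂ}
    (hw : ContinuousOn w (Set.Icc (-b) b)) {s : ℝ} (hs : |s| ≤ 2 * b) :
    ∫ t in (-s)..s, reflectedKernel b H s t * w t =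
      2 * kernelTransform H w (clamp b s) - kernelTransform H w (2 * clamp b s - s) := by
  have hb : 0 ≤ b := by linarith [abs_nonneg s]
  simp only [reflectedKernel, sub_mul, mul_assoc]
  rw [intervalIntegral.integral_sub
    ((intervalIntegrable_triangleKernel_mul hH hw (abs_clamp_le hb s) s).const_mul 2)
    (intervalIntegrable_triangleKernel_mul hH hw (abs_two_mul_clamp_sub_le hs) s),
    intervalIntegral.integral_const_mul, integral_triangleKernel_mul H w (clamp_mem_uIcc hb s),
    integral_triangleKernel_mul H w (two_mul_clamp_sub_mem_uIcc hs)]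

theorem integral_reflectedKernel_mul_of_mem_Icc (w : ℝ → ℂ) {x : ℝ} (hx : x ∈ Set.Icc (-b) b) :
    ∫ t in (-x)..x, reflectedKernel b H x t * w t = kernelTransform H w x :=
  intervalIntegral.integral_congr fun t ht => by
    rw [reflectedKernel_eq (abs_le.2 hx) (by grind [Set.mem_uIcc])]

theorem kernelTransform_congr {w v : ℝ → ℂ} {x : ℝ} (hx : x ∈ Set.Icc (-b) b)
    (hwv : Set.EqOn w v (Set.Icc (-b) b)) : kernelTransform H w x = kernelTransform H v x :=
  intervalIntegral.integral_congr fun t ht => by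
    rw [hwv (Set.uIcc_subset_Icc ⟨neg_le_neg hx.2, by linarith [hx.1]⟩ hx ht)]

theorem hasDerivAt_integral_reflectedKernel_mul (hb : 0 < b)
    (hH : Continuous (Function.uncurry H)) {u v : ℝ → ℂ}
    (hu : ContinuousOn u (Set.Icc (-b) b)) (hvu : Set.EqOn v u (Set.Icc (-b) b))
    {x : ℝ} {D : ℂ} (hx : x ∈ Set.Icc (-b) b) (hD : HasDerivAt (kernelTransform H v) D x) :
    HasDerivAt (fun s => ∫ t in (-s)..s, reflectedKernel b H s t * u t) D x := by
  refine (hasDerivAt_reflection hx hD).congr_of_eventuallyEq ?_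
  have near : ∀ᶠ s in 𝓝 x, |s| ≤ 2 * b :=
    (continuous_abs.tendsto x).eventually_le_const (by linarith [abs_le.2 hx])
  filter_upwards [near] with s hs
  rw [integral_reflectedKernel_mul hH hu hs, real_smul, ofReal_ofNat,
    kernelTransform_congr (abs_le.1 (abs_clamp_le hb.le s)) hvu,
    kernelTransform_congr (abs_le.1 (abs_two_mul_clamp_sub_le hs)) hvu]

theorem exists_hasDerivAt_add_integral_reflectedKernel_mul (hb : 0 < b) {q : ℝ → ℂ}
    (hq : Continuous q) (hH : IsGoursatKernel q H) {u u' u'' : ℝ → ℂ}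
    (hu : ∀ x ∈ Set.Icc (-b) b, HasDerivAt u (u' x) x)
    (hu' : ∀ x ∈ Set.Icc (-b) b, HasDerivAt u' (u'' x) x)
    (hu'' : ContinuousOn u'' (Set.Icc (-b) b)) :
    ∃ D₁ D₂ : ℝ → ℂ,
      (∀ x ∈ Set.Icc (-b) b, HasDerivAt
        (fun s : ℝ => u s + ∫ t in (-s)..s, reflectedKernel b H s t * u t) (D₁ x) x) ∧
      (∀ x ∈ Set.Icc (-b) b, HasDerivAt D₁ (D₂ x) x) ∧
      ContinuousOn D₂ (Set.Icc (-b) b) ∧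
      ∀ x ∈ Set.Icc (-b) b,
        D₂ x - q x * (u x + ∫ t in (-x)..x, reflectedKernel b H x t * u t) =
          u'' x + ∫ t in (-x)..x, reflectedKernel b H x t * u'' t := by
  obtain ⟨v, v', v'', hv, hv', hv'', hvu, hvu', hvu''⟩ :=
    exists_hasDerivAt_hasDerivAt_eqOn_Icc (by linarith) hu hu' hu''
  have hv_cont : Continuous v := continuous_iff_continuousAt.2 fun x => (hv x).continuousAt
  have hv'_cont : Continuous v' := continuous_iff_continuousAt.2 fun x => (hv' x).continuousAt
  have hT {w : ℝ → ℂ} (hw : Continuous w) := continuous_kernelTransform hH.continuous hw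
  refine ⟨fun x => v' x + (2 * H x 0 * v x + kernelTransform (goursatDeriv q H) v x -
      kernelTransform H v' x),
    fun x => v'' x + (q x * (v x + kernelTransform H v x) + kernelTransform H v'' x),
    fun x hx => ?_, fun x _ => (hv' x).add (hH.hasDerivAt_deriv_kernelTransform hq hv hv' hv'' x),
    (hv''.add ((hq.mul (hv_cont.add (hT hv_cont))).add (hT hv''))).continuousOn, fun x hx => ?_⟩
  · exact ((hu x hx).congr_deriv (hvu' hx).symm).add (hasDerivAt_integral_reflectedKernel_mul hb
      hH.continuous (hv_cont.continuousOn.congr hvu.symm) hvu hx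
      (hH.hasDerivAt_kernelTransform hq hv hv'_cont x))
  · simp only [integral_reflectedKernel_mul_of_mem_Icc _ hx, kernelTransform_congr hx hvu,
      kernelTransform_congr hx hvu'', hvu hx, hvu'' hx]
    ring

end ReflectedKernel

theorem sum_coeff_legendreP (n : ℕ) :
    ∑ k ∈ Finset.range (n + 1), ((legendreP n).coeff k : ℂ) = 1 := by
  have at_one := eval_one_legendreP n
  rw [Polynomial.eval_eq_sum_range, natDegree_legendreP] at at_one
  simp only [one_pow, mul_one] at at_one
  exact_mod_cast at_one

theorem betaCoef_eq_kernelTransform {H : ℝ → ℝ → ℂ} (hH : Continuous (Function.uncurry H))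
    {f : ℝ → ℂ} {x : ℝ} (hx : x ≠ 0)
    (hφ : ∀ k, formalPower f k x = x ^ k + kernelTransform H (fun t => (t : ℂ) ^ k) x) (n : ℕ) :
    betaCoef f n x =
      (2 * n + 1) / 2 * kernelTransform H (fun t => ((legendreP n).eval (t / x) : ℝ)) x := by
  have hxc : (x : ℂ) ≠ 0 := ofReal_ne_zero.2 hx
  have eval_div (t : ℝ) : (((legendreP n).eval (t / x) : ℝ) : ℂ) =
      ∑ k ∈ Finset.range (n + 1), ((legendreP n).coeff k / (x : ℂ) ^ k) * (t : ℂ) ^ k := by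
    rw [Polynomial.eval_eq_sum_range, natDegree_legendreP]
    push_cast
    exact Finset.sum_congr rfl fun k _ => by rw [div_pow, mul_div_assoc', div_mul_eq_mul_div]
  simp only [eval_div]
  rw [kernelTransform_sum hH _ (fun k _ => by fun_prop), betaCoef, ← sum_coeff_legendreP n,
    ← Finset.sum_sub_distrib]
  congr 1
  refine Finset.sum_congr rfl fun k _ => ?_
  rw [kernelTransform_const_mul, hφ]
  field_simp
  ring

theorem kernelTransform_comp_div (H : ℝ → ℝ → ℂ) (w : ℝ → ℂ) {x : ℝ} (hx : x ≠ 0) :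
    kernelTransform H (fun t => w (t / x)) x =
      x * ∫ z in (-1 : ℝ)..1, H ((x + x * z) / 2) ((x - x * z) / 2) * w z := by
  have subst := intervalIntegral.integral_comp_div (a := -x) (b := x)
    (fun z => H ((x + x * z) / 2) ((x - x * z) / 2) * w z) hx
  simpa only [kernelTransform, mul_div_cancel₀ _ hx, neg_div, div_self hx, real_smul] using subst

theorem tendstoUniformlyOn_betaCoef_series {H : ℝ → ℝ → ℂ}
    (hH : ContDiff ℝ 1 (Function.uncurry H)) {f : ℝ → ℂ} {x : ℝ} (hx : 0 < x)
    (hφ : ∀ k, formalPower f k x = x ^ k + kernelTransform H (fun t => (t : ℂ) ^ k) x) :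
    TendstoUniformlyOn
      (fun (N : ℕ) (t : ℝ) =>
        ∑ n ∈ Finset.range N, (betaCoef f n x / x) * ((legendreP n).eval (t / x) : ℝ))
      (fun t => H ((x + t) / 2) ((x - t) / 2)) atTop (Set.Icc (-x) x) := by
  have rescaled_smooth : ContDiff ℝ 1 fun z => H ((x + x * z) / 2) ((x - x * z) / 2) :=
    hH.comp (by fun_prop : ContDiff ℝ 1 fun z : ℝ => ((x + x * z) / 2, (x - x * z) / 2))
  have div_mem : Set.MapsTo (· / x) (Set.Icc (-x) x) (Set.Icc (-1 : ℝ) 1) := fun t ht => by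
    rwa [Set.mem_Icc, le_div_iff₀ hx, div_le_iff₀ hx, neg_one_mul, one_mul]
  refine ((((tendstoUniformlyOn_legendreSeries rescaled_smooth).comp (· / x)).mono
    div_mem).congr ?_).congr_right fun t _ => ?_
  · refine .of_forall fun N t _ => Finset.sum_congr rfl fun n _ => ?_
    rw [betaCoef_eq_kernelTransform hH.continuous hx.ne' hφ,
      kernelTransform_comp_div H (fun z => ((legendreP n).eval z : ℝ)) hx.ne', mul_left_comm,
      mul_div_cancel_left₀ _ (ofReal_ne_zero.2 hx.ne')]
  · simp only [Function.comp_apply, mul_div_cancel₀ _ hx.ne']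

/-- the transmutation kernel is given by a Fourier–Legendre series. -/
theorem transmutation_kernel_fourier_legendre
    (b : ℝ) (hb : 0 < b) (q : ℝ → ℂ) (hq : ContinuousOn q (Set.Icc (-b) b))
    (f f' : ℝ → ℂ)
    (hf : ∀ x ∈ Set.Icc (-b) b, HasDerivAt f (f' x) x)
    (hf' : ∀ x ∈ Set.Icc (-b) b, HasDerivAt f' (q x * f x) x)
    (hf0 : f 0 = 1) (hf'0 : f' 0 = 0)
    (hfne : ∀ x ∈ Set.Icc (-b) b, f x ≠ 0) :
    ∃ K : ℝ → ℝ → ℂ,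
      ContinuousOn (fun p : ℝ × ℝ => K p.1 p.2) {p : ℝ × ℝ | |p.2| ≤ |p.1| ∧ |p.1| ≤ b} ∧
      (      ∀ u u' u'' : ℝ → ℂ,
        (∀ x ∈ Set.Icc (-b) b, HasDerivAt u (u' x) x) →
        (∀ x ∈ Set.Icc (-b) b, HasDerivAt u' (u'' x) x) →
        ContinuousOn u'' (Set.Icc (-b) b) →
        ∃ D1 D2 : ℝ → ℂ,
          (∀ x ∈ Set.Icc (-b) b,
            HasDerivAt (fun s : ℝ => u s + ∫ t in (-s)..s, K s t * u t) (D1 x) x) ∧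
          (∀ x ∈ Set.Icc (-b) b, HasDerivAt D1 (D2 x) x) ∧
          ContinuousOn D2 (Set.Icc (-b) b) ∧
          ∀ x ∈ Set.Icc (-b) b,
            D2 x - q x * (u x + ∫ t in (-x)..x, K x t * u t)
              = u'' x + ∫ t in (-x)..x, K x t * u'' t) ∧
      ∀ x ∈ Set.Ioc (0:ℝ) b,
        TendstoUniformlyOn
          (fun N : ℕ => fun t : ℝ =>
            ∑ n ∈ Finset.range N, (betaCoef f n x / (x : ℂ)) * (((legendreP n).eval (t / x) : ℝ) : ℂ))
          (fun t : ℝ => K x t) atTop (Set.Icc (-x) x) := by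
  obtain ⟨p, hp, hpq⟩ := exists_continuous_eqOn_Icc (by linarith) hq
  obtain ⟨H, hH⟩ := exists_isGoursatKernel hp
  have hφ := hH.formalPower_eq_pow_add_kernelTransform hp Set.ordConnected_Icc
    ⟨neg_nonpos.2 hb.le, hb.le⟩ hf (fun x hx => (hf' x hx).congr_deriv (by rw [hpq hx]))
    hf0 hf'0 hfne
  refine ⟨reflectedKernel b H, continuousOn_reflectedKernel hH.continuous, ?_, ?_⟩
  · intro u u' u'' hu hu' hu''
    obtain ⟨D₁, D₂, hD₁, hD₂, hD₂_cont, transmutes⟩ :=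
      exists_hasDerivAt_add_integral_reflectedKernel_mul hb hp hH hu hu' hu''
    exact ⟨D₁, D₂, hD₁, hD₂, hD₂_cont, fun x hx => hpq hx ▸ transmutes x hx⟩
  · intro x hx
    refine (tendstoUniformlyOn_betaCoef_series (hH.contDiff hp) hx.1
      fun k => hφ k x ⟨by linarith [hx.1], hx.2⟩).congr_right fun t ht => ?_
    exact (reflectedKernel_eq (by rw [abs_of_pos hx.1]; exact hx.2)
      (by rw [abs_of_pos hx.1]; exact abs_le.2 ht)).symm

end
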